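/- arXiv:2211.15602 — 3 statements merged into one kernel-verified Lean document; each statement's English description precedes it below -/
import Mathlib

section
/- Let G be a simple digraph (no self-loops, no multi-edges) on n ≥ 4 vertices in which every vertex has indegree 2 and outdegree 2, and suppose G contains no subgraph isomorphic to H_1 and no subgraph isomorphic to H_2. Then G has at most n edges that are not in-contractible. Moreover, G has exactly n edges that are not in-contractible if and only if every connected component of G is isomorphic to G_m for some m ≥ 4. -/
open scoped Classical
open Finset

/-- Number of directed cycles in a finite directed multigraph on `Fin n`
specified by the edge-multiplicity function `G`: self-loops are cycles of
length 1, cycles of length `≥ 2` correspond to cyclic permutations, parallel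
edges give distinct cycles, and cycles are counted up to cyclic rotation. -/
noncomputable def cycleCount (n : ℕ) (G : Fin n → Fin n → ℕ) : ℕ :=
  (∑ v, G v v) +
  ∑ σ : Equiv.Perm (Fin n), if σ.IsCycle then ∏ v ∈ σ.support, G v (σ v) else 0

/-- Number of path-cycle subgraphs of a finite directed multigraph with
multiplicity function `G`: a path-cycle subgraph is given by a nonempty
vertex set `s` together with a successor map `f` on `s` (extended by the
identity off `s`) whose functional digraph on `s` is weakly connected and
has at most one source (vertex of indegree zero); parallel edges give
distinct path-cycles. -/
noncomputable def pathCycleCount {V : Type*} [Fintype V] [DecidableEq V]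
    (G : V → V → ℕ) : ℕ :=
  ∑ s : Finset V, ∑ f : V → V,
    if s.Nonempty ∧ (∀ v, v ∉ s → f v = v) ∧ (∀ v ∈ s, f v ∈ s) ∧
        (∀ u ∈ s, ∀ v ∈ s,
          Relation.ReflTransGen (fun a b => (a ∈ s ∧ f a = b) ∨ (b ∈ s ∧ f b = a)) u v) ∧
        (s.filter fun v => ∀ u ∈ s, f u ≠ v).card ≤ 1
    then ∏ v ∈ s, G v (f v) else 0

/-- `α(k) = (k - 1 + √((k-1)² + 4)) / 2`. -/
noncomputable def alphaK (k : ℕ) : ℝ :=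
  ((k : ℝ) - 1 + Real.sqrt (((k : ℝ) - 1) ^ 2 + 4)) / 2

/-- Multiplicity function of the digraph `G_{n,k}`: on vertices `Fin n`,
edges `(i, i+1 mod n)` have multiplicity `k - 1` and edges `(i, i+2 mod n)`
have multiplicity `1`. -/
def GnkMult (n k : ℕ) : Fin n → Fin n → ℕ := fun i j =>
  if (j.val + n - i.val) % n = 1 then k - 1
  else if (j.val + n - i.val) % n = 2 then 1
  else 0

/-- Multiplicity function of the digraph `G'_{n,k}`: on vertices `Fin n`,
edges `(i, i+1 mod n)` have multiplicity `1` and edges `(i, i+2 mod n)`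
have multiplicity `k - 1`. -/
def Gnk'Mult (n k : ℕ) : Fin n → Fin n → ℕ := fun i j =>
  if (j.val + n - i.val) % n = 1 then 1
  else if (j.val + n - i.val) % n = 2 then k - 1
  else 0

/-- Edge relation of the simple digraph `G_m`: `(i, j)` is an edge whenever
`j - i ≡ 1 (mod m)` or `j - i ≡ 2 (mod m)`. -/
def GmRel (m : ℕ) : Fin m → Fin m → Prop := fun i j =>
  (j.val + m - i.val) % m = 1 ∨ (j.val + m - i.val) % m = 2

/-- The sequence `S_m` with `S_0 = 1`, `S_1 = k - 1`,
`S_m = (k-1) S_{m-1} + S_{m-2}`. -/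
def Sseq (k : ℕ) : ℕ → ℕ
  | 0 => 1
  | 1 => k - 1
  | (m + 2) => (k - 1) * Sseq k (m + 1) + Sseq k m

/-- `F_k(n)`: the maximum number of directed cycles over all digraphs on `n`
vertices with every outdegree exactly `k` in which every multi-edge between
distinct vertices has multiplicity at most `k - 1`. -/
noncomputable def Fk (k n : ℕ) : ℕ :=
  sSup {c : ℕ | ∃ G : Fin n → Fin n → ℕ,
    (∀ v, (∑ u, G v u) = k) ∧ (∀ u v : Fin n, u ≠ v → G u v ≤ k - 1) ∧
    c = cycleCount n G}

/-- Weak connectivity (same connected component) in a directed multigraph. -/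
def MConn {n : ℕ} (G : Fin n → Fin n → ℕ) : Fin n → Fin n → Prop :=
  Relation.ReflTransGen (fun a b => 0 < G a b ∨ 0 < G b a)

/-- A deterministic Markov decision problem with state space `S`, action
space `A` (all actions available at every state), deterministic transition
function `T`, reward function `R` and discount factor `gamma ∈ [0, 1)`. -/
structure DMDP (S A : Type*) where
  T : S → A → S
  R : S → A → ℝ
  gamma : ℝ
  gamma_nonneg : 0 ≤ gamma
  gamma_lt_one : gamma < 1

namespace DMDP

variable {S A : Type*}

/-- The trajectory of states obtained by following policy `π` from `s`. -/
def traj (M : DMDP S A) (π : S → A) (s : S) (t : ℕ) : S :=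
  (fun x => M.T x (π x))^[t] s

/-- The value function `V^π(s) = Σ_t γ^t R(s_t, π(s_t))`. -/
noncomputable def V (M : DMDP S A) (π : S → A) (s : S) : ℝ :=
  ∑' t : ℕ, M.gamma ^ t * M.R (M.traj π s t) (π (M.traj π s t))

/-- The action value function `Q^π(s, a) = R(s, a) + γ V^π(T(s, a))`. -/
noncomputable def Q (M : DMDP S A) (π : S → A) (s : S) (a : A) : ℝ :=
  M.R s a + M.gamma * M.V π (M.T s a)

/-- `π ≺ π'`: pointwise `V^π ≤ V^{π'}` with strict inequality somewhere. -/
def PLt (M : DMDP S A) (π π' : S → A) : Prop :=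
  (∀ s, M.V π s ≤ M.V π' s) ∧ ∃ s, M.V π s < M.V π' s

/-- `π'` is obtained from `π` by policy improvement with arbitrary action
selection. -/
def ImpStep (M : DMDP S A) (π π' : S → A) : Prop :=
  π' ≠ π ∧ ∀ s, π' s ≠ π s → M.V π s < M.Q π s (π' s)

/-- `π'` is obtained from `π` by policy improvement with max-gain action
selection. -/
def MaxGainStep (M : DMDP S A) (π π' : S → A) : Prop :=
  π' ≠ π ∧ ∀ s, π' s ≠ π s →
    M.V π s < M.Q π s (π' s) ∧
    ∀ a, M.V π s < M.Q π s a → M.Q π s a ≤ M.Q π s (π' s)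

/-- The first time step at which a previously visited state recurs on the
trajectory of `π` from `s`. -/
noncomputable def pcLen (M : DMDP S A) (π : S → A) (s : S) : ℕ :=
  sInf {t : ℕ | ∃ t' < t, M.traj π s t' = M.traj π s t}

/-- The path-cycle `P^π_s`: the sequence of state–action–state triples
`(s_t, π(s_t), s_{t+1})` for `t` up to (but excluding) the first recurrence
of a previously visited state. -/
noncomputable def pathCycle (M : DMDP S A) (π : S → A) (s : S) : List (S × A × S) :=
  (List.range (M.pcLen π s)).map fun t =>
    (M.traj π s t, π (M.traj π s t), M.traj π s (t + 1))

/-- The multiplicity function of the DMDP digraph `G_M`: one edge from `s`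
to `T(s, a)` for every action `a`. -/
noncomputable def digraph (M : DMDP S A) [Fintype A] : S → S → ℕ :=
  fun s s' => (Finset.univ.filter fun a => M.T s a = s').card

/-- A state is non-branching if all actions lead to the same next state. -/
def NonBranching (M : DMDP S A) (s : S) : Prop := ∃ s', ∀ a, M.T s a = s'

/-- The relation `∼` on path-cycles: same sequence of states, and wherever
the actions differ the state is non-branching. -/
def PCSim (M : DMDP S A) (P₁ P₂ : List (S × A × S)) : Prop :=
  P₁.length = P₂.length ∧
  ∀ (t : ℕ) (h₁ : t < P₁.length) (h₂ : t < P₂.length),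
    (P₁.get ⟨t, h₁⟩).1 = (P₂.get ⟨t, h₂⟩).1 ∧
    (P₁.get ⟨t, h₁⟩).2.2 = (P₂.get ⟨t, h₂⟩).2.2 ∧
    ((P₁.get ⟨t, h₁⟩).2.1 ≠ (P₂.get ⟨t, h₂⟩).2.1 → M.NonBranching (P₁.get ⟨t, h₁⟩).1)

/-- The relation `≈` on path-cycles: they differ only in equivalent edges,
i.e. have the same sequences of source and target states. -/
def PCApprox (_M : DMDP S A) (P₁ P₂ : List (S × A × S)) : Prop :=
  P₁.length = P₂.length ∧
  ∀ (t : ℕ) (h₁ : t < P₁.length) (h₂ : t < P₂.length),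
    (P₁.get ⟨t, h₁⟩).1 = (P₂.get ⟨t, h₂⟩).1 ∧
    (P₁.get ⟨t, h₁⟩).2.2 = (P₂.get ⟨t, h₂⟩).2.2

end DMDP

section InContractible

variable {V : Type*} {E : V → V → Prop}

/-- Among any three elements satisfying a predicate that holds for at most two, two coincide. -/
theorem eq_or_eq_or_eq_of_card_filter_le_two [Fintype V] {p : V → Prop}
    (h : (Finset.univ.filter p).card ≤ 2) {x y z : V} (hx : p x) (hy : p y) (hz : p z) :
    x = y ∨ x = z ∨ y = z := by
  by_contra! hne
  have : 2 < (Finset.univ.filter p).card :=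
    Finset.two_lt_card.2 ⟨x, by simpa, y, by simpa, z, by simpa, hne.1, hne.2.1, hne.2.2⟩
  omega

/-- The edges that are not in-contractible correspond bijectively to the vertices whose two
out-neighbours are joined by an edge. -/
theorem card_not_inContractible [Fintype V]
    [DecidablePred fun p : V × V => E p.1 p.2 ∧ ∃ x, x ≠ p.1 ∧ x ≠ p.2 ∧ E x p.1 ∧ E x p.2]
    [DecidablePred fun x => ∃ a b, E x a ∧ E x b ∧ E a b] (hloop : ∀ v, ¬ E v v)
    (hout : ∀ v x y z, E v x → E v y → E v z → x = y ∨ x = z ∨ y = z)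
    (hin : ∀ v x y z, E x v → E y v → E z v → x = y ∨ x = z ∨ y = z)
    (hH2 : ∀ a b c, E a b → E a c → E b c → ¬ E c b) :
    (Finset.univ.filter fun p : V × V =>
      E p.1 p.2 ∧ ∃ x, x ≠ p.1 ∧ x ≠ p.2 ∧ E x p.1 ∧ E x p.2).card =
    (Finset.univ.filter fun x => ∃ a b, E x a ∧ E x b ∧ E a b).card := by
  have hne : ∀ {a b}, E a b → a ≠ b := fun h e => hloop _ (e ▸ h)
  symm
  choose f g hf hg hfg using fun x (hx : x ∈ Finset.univ.filter
    fun x => ∃ a b, E x a ∧ E x b ∧ E a b) => (Finset.mem_filter.1 hx).2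
  refine Finset.card_bij (fun x hx => (f x hx, g x hx)) ?_ ?_ ?_
  · intro x hx
    simp only [Finset.mem_filter, Finset.mem_univ, true_and]
    exact ⟨hfg x hx, x, hne (hf x hx), hne (hg x hx), hf x hx, hg x hx⟩
  · intro x hx y hy hxy
    obtain ⟨h1, h2⟩ := Prod.mk.inj hxy
    have hxf := hne (hf x hx)
    have hyf := hne (hf y hy)
    rcases hin (g x hx) x y (f x hx) (hg x hx) (h2 ▸ hg y hy) (hfg x hx) with h | h | h
    · exact h
    · exact absurd h hxf
    · exact absurd (h.trans h1) hyf
  · rintro ⟨a, b⟩ hp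
    simp only [Finset.mem_filter, Finset.mem_univ, true_and] at hp
    obtain ⟨hab, x, -, -, hxa, hxb⟩ := hp
    have hx : x ∈ Finset.univ.filter fun x => ∃ a b, E x a ∧ E x b ∧ E a b := by
      simpa using ⟨a, hxa, b, hxb, hab⟩
    refine ⟨x, hx, ?_⟩
    have h1 := hout x a b (f x hx) hxa hxb (hf x hx)
    have h2 := hout x a b (g x hx) hxa hxb (hg x hx)
    have h3 := hne hab
    have h4 := hne (hfg x hx)
    have h5 := hfg x hx
    have h6 := hH2 x a b hxa hxb hab
    grind

/-- If the out-neighbours of every vertex are joined by an edge, then the edges are given by a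
successor function and its square. -/
theorem exists_injective_successor (hloop : ∀ v, ¬ E v v)
    (hout : ∀ v x y z, E v x → E v y → E v z → x = y ∨ x = z ∨ y = z)
    (hin : ∀ v x y z, E x v → E y v → E z v → x = y ∨ x = z ∨ y = z)
    (hH1 : ∀ a b c, E b a → E c a → E b c → ¬ E c b)
    (h : ∀ x, ∃ a b, E x a ∧ E x b ∧ E a b) :
    ∃ f : V → V, Function.Injective f ∧ ∀ u v, E u v ↔ v = f u ∨ v = f (f u) := by
  have hne : ∀ {a b}, E a b → a ≠ b := fun h e => hloop _ (e ▸ h)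
  choose f g hf hg hfg using h
  have hE : ∀ u v, E u v ↔ v = f u ∨ v = g u := by
    refine fun u v => ⟨fun huv => ?_, ?_⟩
    · rcases hout u v (f u) (g u) huv (hf u) (hg u) with h | h | h
      · exact Or.inl h
      · exact Or.inr h
      · exact absurd h (hne (hfg u))
    · rintro (rfl | rfl)
      exacts [hf u, hg u]
  have hgf : ∀ x, g x = f (f x) := by
    intro x
    rcases (hE _ _).1 (hfg x) with h | h
    · exact h
    · have h1 : E (f (f x)) (g x) := h ▸ hfg (f x)
      rcases hin (g x) x (f x) (f (f x)) (hg x) (hfg x) h1 with h2 | h2 | h2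
      · exact absurd h2 (hne (hf x))
      · have h3 : E (f x) x := by
          have := hf (f x)
          rwa [← h2] at this
        exact absurd h3 (hH1 (g x) x (f x) (hg x) (hfg x) (hf x))
      · exact absurd h2 (hne (hf (f x)))
  refine ⟨f, fun x y hxy => ?_, fun u v => by rw [hE, hgf]⟩
  have h1 : E y (g x) := by
    rw [hgf, hxy, ← hgf]
    exact hg y
  rcases hin (g x) x y (f x) (hg x) h1 (hfg x) with h | h | h
  · exact h
  · exact absurd h (hne (hf x))
  · exact absurd (h.trans hxy) (hne (hf y))

theorem gmRel_iff {m : ℕ} (hm : 3 ≤ m) (i j : Fin m) :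
    GmRel m i j ↔ j.val = (i.val + 1) % m ∨ j.val = (i.val + 2) % m := by
  obtain ⟨i, hi⟩ := i
  obtain ⟨j, hj⟩ := j
  simp only [GmRel]
  have h1 : (j + m - i) % m = if i ≤ j then j - i else j + m - i := by
    split_ifs with h
    · rw [show j + m - i = (j - i) + m by omega, Nat.add_mod_right, Nat.mod_eq_of_lt (by omega)]
    · exact Nat.mod_eq_of_lt (by omega)
  have h2 : ∀ k < m, (i + k) % m = if i + k < m then i + k else i + k - m := by
    intro k hk
    split_ifs with h
    · exact Nat.mod_eq_of_lt h
    · rw [Nat.mod_eq_sub_mod (by omega), Nat.mod_eq_of_lt (by omega)]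
  rw [h1, h2 1 (by omega), h2 2 (by omega)]
  split_ifs <;> omega

theorem exists_iterate_of_reflTransGen [Finite V] {f : V → V} (hf : Function.Injective f)
    (hE : ∀ u v, E u v ↔ v = f u ∨ v = f (f u)) {v u : V}
    (h : Relation.ReflTransGen (fun a b => E a b ∨ E b a) v u) : ∃ k, u = f^[k] v := by
  have hpre : ∀ k w, f w = f^[k] v → ∃ l, w = f^[l] v := by
    intro k w hw
    obtain _ | k := k
    · obtain ⟨p, hp, hpv⟩ := hf.mem_periodicPts v
      refine ⟨p - 1, hf ?_⟩
      rw [hw, ← Function.iterate_succ_apply' f, Nat.succ_eq_add_one, Nat.sub_add_cancel hp]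
      exact hpv.symm
    · exact ⟨k, hf (by rw [hw, Function.iterate_succ_apply'])⟩
  induction h with
  | refl => exact ⟨0, rfl⟩
  | tail _ hbc ih =>
    obtain ⟨k, rfl⟩ := ih
    simp only [hE] at hbc
    rcases hbc with (rfl | rfl) | h | h
    · exact ⟨k + 1, (Function.iterate_succ_apply' f k v).symm⟩
    · exact ⟨k + 2, by rw [Function.iterate_succ_apply', Function.iterate_succ_apply']⟩
    · exact hpre k _ h.symm
    · obtain ⟨l, hl⟩ := hpre k _ h.symm
      exact hpre l _ hl

theorem reflTransGen_iterate {f : V → V} (hE : ∀ u, E u (f u)) (v : V) (k : ℕ) :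
    Relation.ReflTransGen (fun a b => E a b ∨ E b a) v (f^[k] v) := by
  induction k with
  | zero => exact .refl
  | succ k ih =>
    rw [Function.iterate_succ_apply']
    exact ih.tail (Or.inl (hE _))

/-- A finite digraph whose edges are given by an injective successor function and its square has
all its components isomorphic to some `G_m`. -/
theorem exists_component_equiv [Finite V] (hloop : ∀ v, ¬ E v v)
    (hH2 : ∀ a b c, E a b → E a c → E b c → ¬ E c b) {f : V → V} (hf : Function.Injective f)
    (hE : ∀ u v, E u v ↔ v = f u ∨ v = f (f u)) (v : V) :
    ∃ m, 4 ≤ m ∧ ∃ e : {u : V // Relation.ReflTransGen (fun a b => E a b ∨ E b a) v u} ≃ Fin m,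
      ∀ u w, E u.1 w.1 ↔ GmRel m (e u) (e w) := by
  have hE1 : ∀ u, E u (f u) := fun u => (hE _ _).2 (Or.inl rfl)
  have hE2 : ∀ u, E u (f (f u)) := fun u => (hE _ _).2 (Or.inr rfl)
  set m := Function.minimalPeriod f v with hm
  have hpos : 0 < m := Function.minimalPeriod_pos_of_mem_periodicPts (hf.mem_periodicPts v)
  have hper : f^[m] v = v := Function.iterate_minimalPeriod
  have hm4 : 4 ≤ m := by
    by_contra! hlt
    have h1 := hE1 v
    have h2 := hE2 v
    have h3 := hE1 (f v)
    have h4 := hE2 (f (f v))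
    interval_cases m
    · rw [show f v = v from hper] at h1
      exact hloop v h1
    · rw [show f (f v) = v from hper] at h2
      exact hloop v h2
    · have hper' : f (f (f v)) = v := hper
      rw [hper'] at h4
      exact hH2 v (f v) (f (f v)) h1 h2 h3 h4
  have hinj : ∀ {i j}, i < m → j < m → f^[i] v = f^[j] v → i = j := fun hi hj h =>
    (Function.iterate_eq_iterate_iff_of_lt_minimalPeriod hi hj).1 h
  have hmod : ∀ k, f^[k % m] v = f^[k] v := fun k => Function.iterate_mod_minimalPeriod_eq
  let φ : Fin m → {u : V // Relation.ReflTransGen (fun a b => E a b ∨ E b a) v u} :=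
    fun i => ⟨f^[i.val] v, reflTransGen_iterate hE1 v i.val⟩
  have hφ : Function.Bijective φ := by
    refine ⟨fun i j hij => Fin.ext (hinj i.2 j.2 (congrArg Subtype.val hij)), ?_⟩
    rintro ⟨u, hu⟩
    obtain ⟨k, rfl⟩ := exists_iterate_of_reflTransGen hf hE hu
    exact ⟨⟨k % m, Nat.mod_lt _ hpos⟩, Subtype.ext (hmod k)⟩
  refine ⟨m, hm4, (Equiv.ofBijective φ hφ).symm, fun u w => ?_⟩
  obtain ⟨i, rfl⟩ := hφ.2 u
  obtain ⟨j, rfl⟩ := hφ.2 w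
  rw [Equiv.ofBijective_symm_apply_apply, Equiv.ofBijective_symm_apply_apply,
    gmRel_iff (by omega), hE]
  have key : ∀ k, f^[j.val] v = f^[k] v ↔ j.val = k % m := fun k =>
    ⟨fun h => hinj j.2 (Nat.mod_lt _ hpos) (h.trans (hmod k).symm),
      fun h => by rw [h, hmod]⟩
  rw [← key, ← key, Function.iterate_succ_apply', Function.iterate_succ_apply',
    Function.iterate_succ_apply']

/-- In a digraph whose component at `v` is isomorphic to some `G_m`, the out-neighbours of `v`
are joined by an edge. -/
theorem exists_triangle_of_component_equiv {v : V} {m : ℕ} (hm : 3 ≤ m)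
    (e : {u : V // Relation.ReflTransGen (fun a b => E a b ∨ E b a) v u} ≃ Fin m)
    (he : ∀ u w, E u.1 w.1 ↔ GmRel m (e u) (e w)) : ∃ a b, E v a ∧ E v b ∧ E a b := by
  let i := e ⟨v, .refl⟩
  let a := e.symm ⟨(i.val + 1) % m, Nat.mod_lt _ (by omega)⟩
  let b := e.symm ⟨(i.val + 2) % m, Nat.mod_lt _ (by omega)⟩
  refine ⟨a, b, (he ⟨v, .refl⟩ a).2 ?_, (he ⟨v, .refl⟩ b).2 ?_, (he a b).2 ?_⟩ <;>
    rw [gmRel_iff hm] <;> simp [a, b, i, add_assoc]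

end InContractible

theorem stmt_3 (n : ℕ) (hn : 4 ≤ n) (E : Fin n → Fin n → Prop)
    (hloop : ∀ v, ¬ E v v)
    (hout : ∀ v : Fin n, (Finset.univ.filter fun u => E v u).card = 2)
    (hin : ∀ v : Fin n, (Finset.univ.filter fun u => E u v).card = 2)
    (hH1 : ¬ ∃ a b c : Fin n, a ≠ b ∧ a ≠ c ∧ b ≠ c ∧
      E b a ∧ E c a ∧ E b c ∧ E c b)
    (hH2 : ¬ ∃ a b c : Fin n, a ≠ b ∧ a ≠ c ∧ b ≠ c ∧
      E a b ∧ E a c ∧ E b c ∧ E c b) :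
    (Finset.univ.filter fun p : Fin n × Fin n =>
        E p.1 p.2 ∧ ∃ x, x ≠ p.1 ∧ x ≠ p.2 ∧ E x p.1 ∧ E x p.2).card ≤ n ∧
    ((Finset.univ.filter fun p : Fin n × Fin n =>
        E p.1 p.2 ∧ ∃ x, x ≠ p.1 ∧ x ≠ p.2 ∧ E x p.1 ∧ E x p.2).card = n ↔
      ∀ v : Fin n, ∃ m, 4 ≤ m ∧
        ∃ e : {u : Fin n // Relation.ReflTransGen (fun a b => E a b ∨ E b a) v u} ≃ Fin m,
          ∀ u w : {u : Fin n // Relation.ReflTransGen (fun a b => E a b ∨ E b a) v u},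
            E u.1 w.1 ↔ GmRel m (e u) (e w)) := by
  have hne : ∀ {a b}, E a b → a ≠ b := fun h e => hloop _ (e ▸ h)
  have hout' : ∀ v x y z, E v x → E v y → E v z → x = y ∨ x = z ∨ y = z := fun v _ _ _ =>
    eq_or_eq_or_eq_of_card_filter_le_two (p := fun u => E v u) (hout v).le
  have hin' : ∀ v x y z, E x v → E y v → E z v → x = y ∨ x = z ∨ y = z := fun v _ _ _ =>
    eq_or_eq_or_eq_of_card_filter_le_two (p := fun u => E u v) (hin v).le
  have hH1' : ∀ a b c, E b a → E c a → E b c → ¬ E c b := fun a b c h1 h2 h3 h4 =>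
    hH1 ⟨a, b, c, (hne h1).symm, (hne h2).symm, hne h3, h1, h2, h3, h4⟩
  have hH2' : ∀ a b c, E a b → E a c → E b c → ¬ E c b := fun a b c h1 h2 h3 h4 =>
    hH2 ⟨a, b, c, hne h1, hne h2, hne h3, h1, h2, h3, h4⟩
  rw [card_not_inContractible hloop hout' hin' hH2']
  refine ⟨(Finset.card_le_univ _).trans_eq (Fintype.card_fin n), fun h => ?_, fun h => ?_⟩
  · have hall := Finset.card_filter_eq_iff.1 (h.trans (Finset.card_fin n).symm)
    obtain ⟨f, hf, hE⟩ := exists_injective_successor hloop hout' hin' hH1' fun x =>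
      hall x (Finset.mem_univ x)
    exact exists_component_equiv hloop hH2' hf hE
  · refine (Finset.card_filter_eq_iff.2 fun v _ => ?_).trans (Finset.card_fin n)
    obtain ⟨m, hm, e, he⟩ := h v
    exact exists_triangle_of_component_equiv (by omega) e he
end

section
/- Let k ≥ 2 and let G be a digraph with n ≥ 4 vertices each of whose connected components is isomorphic to G_{m,k} or to G'_{m,k} for some m ≥ 4. Then C(G) ≤ (k−1)·F_k(n−1) + F_k(n−2). -/
open scoped Classical
open Finset

/-- Number of ways to realize the permutation `σ` by edges of `G` leaving its support. -/
noncomputable def permWeight {V : Type*} [Fintype V] [DecidableEq V] (G : V → V → ℕ)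
    (σ : Equiv.Perm V) : ℕ :=
  ∏ v ∈ σ.support, G v (σ v)

/-- The Lucas sequence with parameters `a`, `b`. -/
def lucasSeq (a b : ℕ) : ℕ → ℕ
  | 0 => 2
  | 1 => a
  | n + 2 => a * lucasSeq a b (n + 1) + b * lucasSeq a b n

/-- Transfer matrix between consecutive vertices: `true` means that the vertex is visited. -/
def stepMatrix (a b : ℕ) : Matrix Bool Bool ℕ := fun p q =>
  if p then (if q then a else b) else (if q then 1 else 0)

/-- The circulant digraph with `a` edges `v → v + 1` and `b` edges `v → v + 1 + 1`. -/
def circMult (m a b : ℕ) : Fin (m + 3) → Fin (m + 3) → ℕ := fun u v =>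
  if v = u + 1 then a else if v = u + 1 + 1 then b else 0

lemma stepMatrix_sq (a b : ℕ) :
    stepMatrix a b ^ 2 = a • stepMatrix a b + b • (1 : Matrix Bool Bool ℕ) := by
  ext p q
  rw [pow_two, Matrix.mul_apply]
  rw [Matrix.add_apply, Matrix.smul_apply, Matrix.smul_apply]
  cases p <;> cases q <;> simp [stepMatrix]

lemma trace_stepMatrix_pow (a b n : ℕ) :
    Matrix.trace (stepMatrix a b ^ n) = lucasSeq a b n := by
  induction n using lucasSeq.induct with
  | case1 => simp [lucasSeq]
  | case2 => simp [lucasSeq, Matrix.trace, stepMatrix]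
  | case3 n h1 h2 =>
    rw [show n.succ.succ = n + 2 from rfl, pow_add, stepMatrix_sq, mul_add,
      Matrix.trace_add, mul_smul_comm, mul_smul_comm, ← pow_succ, mul_one, Matrix.trace_smul, Matrix.trace_smul, h1, h2]
    simp [lucasSeq]

lemma matrix_pow_succ_apply_eq_sum {ι : Type*} [Fintype ι] [DecidableEq ι]
    (M : Matrix ι ι ℕ) (n : ℕ) (i j : ι) :
    (M ^ (n + 1)) i j = ∑ f : Fin n → ι,
      (∏ v : Fin n, M ((Fin.cons i f : Fin (n + 1) → ι) v.castSucc) (f v)) *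
        M ((Fin.cons i f : Fin (n + 1) → ι) (Fin.last n)) j := by
  induction n generalizing i with
  | zero => simp [Fin.last]
  | succ n ih =>
    rw [pow_succ', Matrix.mul_apply, ← (Fin.consEquiv fun _ => ι).sum_comp,
      Fintype.sum_prod_type]
    refine Finset.sum_congr rfl fun i' _ => ?_
    rw [ih, Finset.mul_sum]
    refine Finset.sum_congr rfl fun f _ => ?_
    change _ = (∏ v, M ((Fin.cons i (Fin.cons i' f : Fin (n + 1) → ι) : Fin (n + 2) → ι)
      v.castSucc) ((Fin.cons i' f : Fin (n + 1) → ι) v)) * M ((Fin.cons i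
        (Fin.cons i' f : Fin (n + 1) → ι) : Fin (n + 2) → ι) (Fin.last (n + 1))) j
    rw [Fin.prod_univ_succ, ← Fin.succ_last, mul_assoc]
    simp only [← Fin.succ_castSucc, Fin.cons_succ, Fin.castSucc_zero, Fin.cons_zero]

lemma trace_pow_succ_eq_sum {ι : Type*} [Fintype ι] [DecidableEq ι]
    (M : Matrix ι ι ℕ) (n : ℕ) :
    Matrix.trace (M ^ (n + 1)) = ∑ f : Fin (n + 1) → ι, ∏ v, M (f v) (f (v + 1)) := by
  rw [Matrix.trace, ← (Fin.consEquiv fun _ => ι).sum_comp, Fintype.sum_prod_type]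
  refine Finset.sum_congr rfl fun i _ => ?_
  rw [Matrix.diag_apply, matrix_pow_succ_apply_eq_sum]
  refine Finset.sum_congr rfl fun f _ => ?_
  rw [Fin.prod_univ_castSucc]
  simp [Fin.consEquiv]

lemma sum_prod_stepMatrix (m a b : ℕ) :
    ∑ f : Fin (m + 3) → Bool, ∏ v, stepMatrix a b (f v) (f (v + 1)) = lucasSeq a b (m + 3) := by
  rw [← trace_stepMatrix_pow, trace_pow_succ_eq_sum]

lemma fin_forall_of_succ {m : ℕ} {P : Fin (m + 3) → Prop} (h : ∀ v, P v → P (v + 1))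
    {v : Fin (m + 3)} (hv : P v) (w : Fin (m + 3)) : P w := by
  have key : ∀ d : Fin (m + 3), P (v + d) := by
    intro d
    induction d using Fin.induction with
    | zero => simpa using hv
    | succ i ih =>
      rw [← Fin.coeSucc_eq_succ, ← add_assoc]
      exact h _ ih
  simpa using key (w - v)

lemma fin_add_one_ne {m : ℕ} (v : Fin (m + 3)) : v + 1 ≠ v := by
  simp

lemma fin_add_one_add_one_ne {m : ℕ} (v : Fin (m + 3)) : v + 1 + 1 ≠ v := by
  rw [add_assoc, Ne, add_eq_left, Fin.ext_iff, Fin.val_add]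
  simp [Nat.mod_eq_of_lt (show 2 < m + 3 by omega)]

/-- The vertex following `v` when exactly the vertices with `f v = true` are visited. -/
def nextVisited {m : ℕ} (f : Fin (m + 3) → Bool) (v : Fin (m + 3)) : Fin (m + 3) :=
  if f v then (if f (v + 1) then v + 1 else v + 1 + 1) else v

lemma nextVisited_eq_self_iff {m : ℕ} (f : Fin (m + 3) → Bool) (v : Fin (m + 3)) :
    nextVisited f v = v ↔ f v = false := by
  have h1 := fin_add_one_ne v
  have h2 := fin_add_one_add_one_ne v
  unfold nextVisited
  split_ifs <;> simp_all

lemma permWeight_eq_prod_stepMatrix {m a b : ℕ} {σ : Equiv.Perm (Fin (m + 3))}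
    {f : Fin (m + 3) → Bool} (hσ : ∀ v, σ v = nextVisited f v)
    (hgap : ∀ v, f v = false → f (v + 1) = true) :
    permWeight (circMult m a b) σ = ∏ v, stepMatrix a b (f v) (f (v + 1)) := by
  have hs : σ.support = Finset.univ.filter fun v => f v = true := by
    ext v
    simp [hσ, nextVisited_eq_self_iff]
  rw [permWeight, hs, Finset.prod_filter]
  refine Finset.prod_congr rfl fun v _ => ?_
  rw [hσ]
  cases hv : f v
  · simp [stepMatrix, hgap v hv]
  · cases hv' : f (v + 1) <;> simp [stepMatrix, circMult, nextVisited, hv, hv']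

lemma gap_of_prod_ne_zero {m a b : ℕ} {f : Fin (m + 3) → Bool}
    (h : ∏ v, stepMatrix a b (f v) (f (v + 1)) ≠ 0) (v : Fin (m + 3)) (hv : f v = false) :
    f (v + 1) = true := by
  have := Finset.prod_ne_zero_iff.1 h v (Finset.mem_univ v)
  by_contra hc
  simp [stepMatrix, hv, hc] at this

lemma nextVisited_injective {m : ℕ} {f : Fin (m + 3) → Bool}
    (hgap : ∀ v, f v = false → f (v + 1) = true) : Function.Injective (nextVisited f) := by
  have hmem : ∀ v, f v = true → f (nextVisited f v) = true := by
    intro v hv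
    unfold nextVisited
    cases hv' : f (v + 1)
    · simpa [hv] using hgap _ hv'
    · simp [hv, hv']
  have hcross : ∀ u v, f u = true → f (v + 1) = false → u + 1 ≠ v + 1 + 1 := by
    intro u v hu hv h
    rw [add_left_inj] at h
    simp_all
  intro u v h
  cases hu : f u <;> cases hv : f v
  · simpa [nextVisited, hu, hv] using h
  · have := hmem v hv
    rw [← h, nextVisited, hu] at this
    simp [hu] at this
  · have := hmem u hu
    rw [h, nextVisited, hv] at this
    simp [hv] at this
  · cases hu' : f (u + 1) <;> cases hv' : f (v + 1) <;>
      simp only [nextVisited, hu, hv, hu', hv', if_true, Bool.false_eq_true, if_false] at h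
    · simpa using h
    · exact absurd h.symm (hcross v u hv hu')
    · exact absurd h (hcross u v hu hv')
    · simpa using h

lemma isCycle_of_eq_nextVisited {m : ℕ} {f : Fin (m + 3) → Bool}
    (hgap : ∀ v, f v = false → f (v + 1) = true) {σ : Equiv.Perm (Fin (m + 3))}
    (hσ : ∀ v, σ v = nextVisited f v) : σ.IsCycle := by
  obtain ⟨x, hx⟩ : ∃ x, f x = true := by
    cases h0 : f 0
    · exact ⟨_, hgap 0 h0⟩
    · exact ⟨0, h0⟩
  refine ⟨x, by simp [hσ, nextVisited_eq_self_iff, hx], fun y hy => ?_⟩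
  have hy' : f y = true := by simpa [hσ, nextVisited_eq_self_iff] using hy
  have step : ∀ v, f v = true → f (v + 1) = true → σ.SameCycle x v → σ.SameCycle x (v + 1) := by
    intro v hv hv' h
    have : σ v = v + 1 := by simp [hσ, nextVisited, hv, hv']
    rw [← this]
    exact Equiv.Perm.sameCycle_apply_right.2 h
  refine (fin_forall_of_succ (P := fun v => (f v = true → σ.SameCycle x v) ∧
    (f (v + 1) = true → σ.SameCycle x (v + 1))) ?_ (v := x) ?_ y).1 hy'
  · rintro v ⟨h1, h2⟩
    refine ⟨h2, fun h => ?_⟩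
    cases hv' : f (v + 1)
    · have hv : f v = true := by
        by_contra hc
        simp [hgap v (by simpa using hc)] at hv'
      have : σ v = v + 1 + 1 := by simp [hσ, nextVisited, hv, hv']
      rw [← this]
      exact Equiv.Perm.sameCycle_apply_right.2 (h1 hv)
    · exact step _ hv' h (h2 hv')
  · exact ⟨fun _ => Equiv.Perm.SameCycle.refl _ _,
      fun h => step x hx h (Equiv.Perm.SameCycle.refl _ _)⟩

/-- The rotation by two steps. -/
def rotateTwo (m : ℕ) : Equiv.Perm (Fin (m + 3)) := finRotate (m + 3) ^ 2

lemma rotateTwo_apply {m : ℕ} (v : Fin (m + 3)) : rotateTwo m v = v + 1 + 1 := by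
  simp [rotateTwo, pow_two, finRotate_apply]

lemma isCycle_rotateTwo {m : ℕ} (h : Odd (m + 3)) : (rotateTwo m).IsCycle := by
  have hc : (finRotate (m + 3)).IsCycle := isCycle_finRotate
  rw [rotateTwo, hc.pow_iff, hc.orderOf, support_finRotate, Finset.card_univ, Fintype.card_fin]
  exact Nat.coprime_two_left.2 h

lemma permWeight_rotateTwo (m a b : ℕ) :
    permWeight (circMult m a b) (rotateTwo m) = b ^ (m + 3) := by
  have hs : (rotateTwo m).support = Finset.univ := by
    ext v
    simp [rotateTwo_apply, fin_add_one_add_one_ne]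
  simp [permWeight, hs, rotateTwo_apply, circMult]

/-- The indicator of the support of `σ`. -/
def visited {m : ℕ} (σ : Equiv.Perm (Fin (m + 3))) (u : Fin (m + 3)) : Bool :=
  decide (σ u ≠ u)

lemma eq_nextVisited_of_permWeight_ne_zero {m a b : ℕ} {σ : Equiv.Perm (Fin (m + 3))}
    (hw : permWeight (circMult m a b) σ ≠ 0) (h1 : σ ≠ 1) (h2 : σ ≠ rotateTwo m) :
    (∀ v, σ v = nextVisited (visited σ) v) ∧
      ∀ v, σ v = v → σ (v + 1) ≠ v + 1 := by
  have hstep : ∀ v, σ v ≠ v → σ v = v + 1 ∨ σ v = v + 1 + 1 := by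
    intro v hv
    have := Finset.prod_ne_zero_iff.1 hw v (Equiv.Perm.mem_support.2 hv)
    unfold circMult at this
    by_contra! hc
    simp [hc] at this
  constructor
  · intro v
    by_cases hv : σ v = v
    · simp [nextVisited, visited, hv]
    by_cases hv' : σ (v + 1) = v + 1
    · have : σ v ≠ v + 1 := fun h => fin_add_one_ne v (σ.injective (hv'.trans h.symm))
      have := (hstep v hv).resolve_left this
      simp [nextVisited, visited, hv', this, fin_add_one_add_one_ne]
    · rcases hstep v hv with h | h
      · simp [nextVisited, visited, h, hv']
      · exfalso
        apply h2
        ext w : 1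
        rw [rotateTwo_apply]
        refine (fin_forall_of_succ (P := fun v => σ v = v + 1 + 1 ∧ σ (v + 1) ≠ v + 1) ?_
          (v := v) ⟨h, hv'⟩ w).1
        rintro u ⟨hu, hu'⟩
        constructor
        · refine (hstep _ hu').resolve_left fun hc => ?_
          exact fin_add_one_ne u (σ.injective (hc.trans hu.symm))
        · intro hc
          have := σ.injective (hc.trans hu.symm)
          exact fin_add_one_add_one_ne u this
  · intro v hv hv'
    apply h1
    ext w : 1
    refine (fin_forall_of_succ (P := fun v => σ v = v ∧ σ (v + 1) = v + 1) ?_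
      (v := v) ⟨hv, hv'⟩ w).1
    rintro u ⟨hu, hu'⟩
    refine ⟨hu', ?_⟩
    by_contra hc
    obtain ⟨t, ht⟩ := σ.surjective (u + 1 + 1)
    have htt : σ t ≠ t := by
      intro h
      rw [h] at ht
      exact hc (ht ▸ h)
    rcases hstep t htt with h | h
    · rw [h, add_left_inj] at ht
      exact htt (ht ▸ hu')
    · rw [h, add_left_inj, add_left_inj] at ht
      exact htt (ht ▸ hu)

lemma sum_permWeight_circMult_le (m a b : ℕ) :
    ∑ σ ∈ Finset.univ.filter (fun σ : Equiv.Perm (Fin (m + 3)) => σ ≠ 1),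
      permWeight (circMult m a b) σ ≤ lucasSeq a b (m + 3) + b ^ (m + 3) := by
  obtain ⟨A, hA⟩ : ∃ A : Finset (Equiv.Perm (Fin (m + 3))), ∀ σ, σ ∈ A ↔
      σ ≠ 1 ∧ σ ≠ rotateTwo m ∧ permWeight (circMult m a b) σ ≠ 0 :=
    ⟨Finset.univ.filter fun σ => σ ≠ 1 ∧ σ ≠ rotateTwo m ∧ permWeight (circMult m a b) σ ≠ 0,
      by simp⟩
  have hsub : ∑ σ ∈ Finset.univ.filter (fun σ : Equiv.Perm (Fin (m + 3)) => σ ≠ 1),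
      permWeight (circMult m a b) σ
      ≤ ∑ σ ∈ insert (rotateTwo m) A, permWeight (circMult m a b) σ := by
    refine Finset.sum_le_sum_of_ne_zero fun σ hσ h0 => ?_
    by_cases hr : σ = rotateTwo m
    · simp [hr]
    · simp_all
  refine hsub.trans ?_
  rw [Finset.sum_insert (by simp [hA]), permWeight_rotateTwo, add_comm]
  gcongr
  rw [← sum_prod_stepMatrix]
  have hA' : ∀ σ ∈ A, (∀ v, σ v = nextVisited (visited σ) v) ∧
      ∀ v, σ v = v → σ (v + 1) ≠ v + 1 := by
    intro σ hσ
    obtain ⟨h1, h2, h3⟩ := (hA σ).1 hσ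
    exact eq_nextVisited_of_permWeight_ne_zero h3 h1 h2
  have hinj : Set.InjOn (visited (m := m)) A := by
    intro σ hσ τ hτ h
    ext v : 1
    rw [(hA' σ hσ).1, (hA' τ hτ).1]
    exact congrArg (fun f => nextVisited f v) h
  calc ∑ σ ∈ A, permWeight (circMult m a b) σ
      = ∑ σ ∈ A, (fun f : Fin (m + 3) → Bool => ∏ v, stepMatrix a b (f v) (f (v + 1)))
          (visited σ) := by
        refine Finset.sum_congr rfl fun σ hσ => ?_
        refine permWeight_eq_prod_stepMatrix (hA' σ hσ).1 fun v hv => ?_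
        simpa [visited] using (hA' σ hσ).2 v (by simpa [visited] using hv)
    _ = ∑ f ∈ A.image visited,
          ∏ v, stepMatrix a b (f v) (f (v + 1)) :=
        (Finset.sum_image (f := fun f : Fin (m + 3) → Bool =>
          ∏ v, stepMatrix a b (f v) (f (v + 1))) hinj).symm
    _ ≤ _ := Finset.sum_le_sum_of_subset (Finset.subset_univ _)

lemma le_sum_isCycle_circMult (m a b : ℕ) :
    lucasSeq a b (m + 3) + (if Odd (m + 3) then b ^ (m + 3) else 0) ≤
      ∑ σ ∈ Finset.univ.filter (fun σ : Equiv.Perm (Fin (m + 3)) => σ.IsCycle),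
        permWeight (circMult m a b) σ := by
  have hex : ∀ f : Fin (m + 3) → Bool, ∃ σ : Equiv.Perm (Fin (m + 3)),
      (∀ v, f v = false → f (v + 1) = true) → ∀ v, σ v = nextVisited f v := by
    intro f
    by_cases h : ∀ v, f v = false → f (v + 1) = true
    · exact ⟨Equiv.ofBijective _ (Finite.injective_iff_bijective.1 (nextVisited_injective h)),
        fun _ _ => rfl⟩
    · exact ⟨1, fun h' => absurd h' h⟩
  choose F hF using hex
  set B := Finset.univ.filter fun f : Fin (m + 3) → Bool =>
    ∀ v, f v = false → f (v + 1) = true with hB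
  have hB' : ∀ f ∈ B, ∀ v, f v = false → f (v + 1) = true := fun f hf =>
    (Finset.mem_filter.1 hf).2
  have hinj : Set.InjOn F B := by
    intro f hf g hg h
    ext v : 1
    have h1 := hF f (hB' f hf) v
    rw [h, hF g (hB' g hg)] at h1
    have h2 := nextVisited_eq_self_iff f v
    rw [← h1, nextVisited_eq_self_iff] at h2
    cases hfv : f v <;> cases hgv : g v <;> simp_all
  have hsum : lucasSeq a b (m + 3) = ∑ σ ∈ B.image F, permWeight (circMult m a b) σ := by
    rw [Finset.sum_image hinj, ← sum_prod_stepMatrix]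
    symm
    rw [Finset.sum_congr rfl fun f hf =>
      permWeight_eq_prod_stepMatrix (a := a) (b := b) (hF f (hB' f hf)) (hB' f hf)]
    refine Finset.sum_subset (Finset.subset_univ _) fun f _ hf => ?_
    by_contra h0
    exact hf (by simpa [hB] using gap_of_prod_ne_zero h0)
  have hcyc : B.image F ⊆ Finset.univ.filter fun σ : Equiv.Perm (Fin (m + 3)) => σ.IsCycle := by
    intro σ hσ
    obtain ⟨f, hf, rfl⟩ := Finset.mem_image.1 hσ
    simpa using isCycle_of_eq_nextVisited (hB' f hf) (hF f (hB' f hf))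
  have hrot : rotateTwo m ∉ B.image F := by
    intro h
    obtain ⟨f, hf, hfr⟩ := Finset.mem_image.1 h
    have key : ∀ v, nextVisited f v = v + 1 + 1 := fun v => by
      rw [← hF f (hB' f hf), hfr, rotateTwo_apply]
    have htrue : ∀ v, f v = true := by
      intro v
      by_contra hc
      have := (nextVisited_eq_self_iff f v).2 (by simpa using hc)
      exact fin_add_one_add_one_ne v ((key v).symm.trans this)
    have := key 0
    simp only [nextVisited, htrue, if_true] at this
    exact fin_add_one_ne _ this.symm
  split_ifs with hodd
  · rw [hsum, ← permWeight_rotateTwo m a b, add_comm, ← Finset.sum_insert hrot]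
    refine Finset.sum_le_sum_of_subset (Finset.insert_subset ?_ hcyc)
    simpa using isCycle_rotateTwo hodd
  · rw [hsum, add_zero]
    exact Finset.sum_le_sum_of_subset hcyc

lemma cycleCount_eq (n : ℕ) (G : Fin n → Fin n → ℕ) :
    cycleCount n G = (∑ v, G v v) +
      ∑ σ ∈ Finset.univ.filter (fun σ : Equiv.Perm (Fin n) => σ.IsCycle), permWeight G σ := by
  rw [cycleCount, Finset.sum_filter]
  rfl

lemma le_Fk {n k : ℕ} (G : Fin n → Fin n → ℕ) (h1 : ∀ v, ∑ u, G v u = k)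
    (h2 : ∀ u v : Fin n, u ≠ v → G u v ≤ k - 1) : cycleCount n G ≤ Fk k n := by
  refine le_csSup (Set.Finite.bddAbove ?_) ⟨G, h1, h2, rfl⟩
  refine ((Set.finite_Icc (0 : Fin n → Fin n → ℕ) fun _ _ => k).image (cycleCount n)).subset ?_
  rintro c ⟨H, hH, -, rfl⟩
  refine ⟨H, ⟨fun _ _ => Nat.zero_le _, fun v u => ?_⟩, rfl⟩
  rw [← hH v]
  exact Finset.single_le_sum (fun _ _ => Nat.zero_le _) (Finset.mem_univ u)

lemma lucasSeq_add_le_Fk {k : ℕ} (hk : 2 ≤ k) (m : ℕ) :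
    lucasSeq (k - 1) 1 (m + 3) + (if Odd (m + 3) then 1 else 0) ≤ Fk k (m + 3) := by
  refine le_trans ?_ (le_Fk (circMult m (k - 1) 1) (fun v => ?_) fun u v _ => ?_)
  · rw [cycleCount_eq]
    have := le_sum_isCycle_circMult m (k - 1) 1
    rw [one_pow] at this
    omega
  · have : ∀ u, circMult m (k - 1) 1 v u =
        (if u = v + 1 then k - 1 else 0) + if u = v + 1 + 1 then 1 else 0 := by
      intro u
      have := fin_add_one_ne (v + 1)
      unfold circMult
      split_ifs <;> simp_all
    simp only [this, Finset.sum_add_distrib, Finset.sum_ite_eq', Finset.mem_univ, if_true]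
    omega
  · unfold circMult
    split_ifs <;> omega

lemma lucasSeq_two_le_Fk {k : ℕ} (hk : 2 ≤ k) : lucasSeq (k - 1) 1 2 ≤ Fk k 2 := by
  refine le_trans ?_ (le_Fk (fun u v => if u = v then 1 else k - 1) (fun v => ?_) fun u v h => ?_)
  · rw [cycleCount_eq]
    have hmem : Equiv.swap (0 : Fin 2) 1 ∈
        Finset.univ.filter (fun σ : Equiv.Perm (Fin 2) => σ.IsCycle) := by
      simpa using Equiv.Perm.isCycle_swap (by decide)
    have := Finset.single_le_sum (f := permWeight fun u v : Fin 2 => if u = v then 1 else k - 1)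
      (fun _ _ => Nat.zero_le _) hmem
    have hw : permWeight (fun u v : Fin 2 => if u = v then 1 else k - 1)
        (Equiv.swap (0 : Fin 2) 1) = (k - 1) * (k - 1) := by
      rw [permWeight, Equiv.Perm.support_swap (by decide), Finset.prod_pair (by decide)]
      simp
    rw [hw] at this
    simp [lucasSeq]
    omega
  · fin_cases v <;> simp <;> omega
  · simp [h]

lemma lucasSeq_le_Fk {k n : ℕ} (hk : 2 ≤ k) (hn : 2 ≤ n) : lucasSeq (k - 1) 1 n ≤ Fk k n := by
  rcases hn.eq_or_lt with rfl | hn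
  · exact lucasSeq_two_le_Fk hk
  · obtain ⟨m, rfl⟩ := Nat.exists_eq_add_of_le' hn
    exact (Nat.le_add_right _ _).trans (lucasSeq_add_le_Fk hk m)

lemma lucasSeq_add_one_le_Fk {k n : ℕ} (hk : 2 ≤ k) (hn : 2 ≤ n) (hodd : Odd n) :
    lucasSeq (k - 1) 1 n + 1 ≤ Fk k n := by
  rcases hn.eq_or_lt with rfl | hn
  · exact absurd hodd (by decide)
  · obtain ⟨m, rfl⟩ := Nat.exists_eq_add_of_le' hn
    simpa [show Odd (m + 3) from hodd] using lucasSeq_add_le_Fk hk m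

lemma lucasSeq_pos {a : ℕ} (ha : 1 ≤ a) (n : ℕ) : 1 ≤ lucasSeq a 1 n := by
  induction n using lucasSeq.induct with
  | case1 => simp [lucasSeq]
  | case2 => simpa [lucasSeq]
  | case3 n h1 h2 => simp only [lucasSeq]; nlinarith

lemma lucasSeq_add_le {a : ℕ} (ha : 1 ≤ a) (n : ℕ) :
    lucasSeq a 1 (n + 1) + lucasSeq a 1 n ≤ lucasSeq a 1 (n + 2) := by
  simp only [lucasSeq]
  nlinarith

lemma pow_le_lucasSeq (a n : ℕ) (hn : 1 ≤ n) : a ^ n ≤ lucasSeq a 1 n := by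
  induction n, hn using Nat.le_induction with
  | base => simp [lucasSeq]
  | succ n hn ih =>
    obtain ⟨m, rfl⟩ := Nat.exists_eq_add_of_le' hn
    simp only [lucasSeq]
    calc a ^ (m + 1 + 1) = a * a ^ (m + 1) := by ring
      _ ≤ a * lucasSeq a 1 (m + 1) := by gcongr
      _ ≤ _ := by omega

lemma lucasSeq_one_add_pow_le {a : ℕ} (ha : 1 ≤ a) (m : ℕ) :
    lucasSeq 1 a (m + 3) + a ^ (m + 3) ≤ lucasSeq a 1 (m + 3) + 1 := by
  induction m using Nat.twoStepInduction with
  | zero =>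
    apply le_of_eq
    simp only [lucasSeq]
    ring
  | one =>
    simp only [lucasSeq]
    obtain ⟨y, rfl⟩ := Nat.exists_eq_add_of_le' ha
    ring_nf
    nlinarith [Nat.zero_le (y ^ 2)]
  | more m h1 h2 =>
    have hE := pow_le_lucasSeq a (m + 3) (by omega)
    have hL := lucasSeq_pos ha (m + 2)
    have hp : a ≤ a ^ (m + 3) := Nat.le_self_pow (by omega) a
    have r1 : lucasSeq 1 a (m + 5) = 1 * lucasSeq 1 a (m + 4) + a * lucasSeq 1 a (m + 3) := rfl
    have r2 : lucasSeq a 1 (m + 5) = a * lucasSeq a 1 (m + 4) + 1 * lucasSeq a 1 (m + 3) := rfl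
    have r3 : lucasSeq a 1 (m + 4) = a * lucasSeq a 1 (m + 3) + 1 * lucasSeq a 1 (m + 2) := rfl
    have p1 : a ^ (m + 4) = a * a ^ (m + 3) := by ring
    have p2 : a ^ (m + 5) = a * a ^ (m + 4) := by ring
    change lucasSeq 1 a (m + 4) + a ^ (m + 4) ≤ lucasSeq a 1 (m + 4) + 1 at h2
    change lucasSeq 1 a (m + 5) + a ^ (m + 5) ≤ lucasSeq a 1 (m + 5) + 1
    rw [r1, r2, p2]
    generalize lucasSeq 1 a (m + 4) = X at *
    generalize lucasSeq 1 a (m + 3) = Y at *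
    generalize lucasSeq a 1 (m + 4) = U at *
    generalize lucasSeq a 1 (m + 3) = V at *
    generalize a ^ (m + 4) = P at *
    generalize a ^ (m + 3) = Q at *
    generalize lucasSeq a 1 (m + 2) = Z at *
    have hmono : V + P ≤ U + Q := by
      subst r3 p1
      nlinarith
    obtain ⟨y, rfl⟩ := Nat.exists_eq_add_of_le' ha
    nlinarith [Nat.mul_le_mul_left y hmono, Nat.mul_le_mul_left y h1]

lemma lucasSeq_mono {a : ℕ} (ha : 1 ≤ a) {m n : ℕ} (hm : 1 ≤ m) (hmn : m ≤ n) :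
    lucasSeq a 1 m ≤ lucasSeq a 1 n := by
  induction n, hmn using Nat.le_induction with
  | base => rfl
  | succ n hn ih =>
    obtain ⟨p, rfl⟩ := Nat.exists_eq_add_of_le' (hm.trans hn)
    have := lucasSeq_add_le ha p
    exact ih.trans (le_trans (Nat.le_add_right _ _) this)

lemma lucasSeq_superadditive {a : ℕ} (ha : 1 ≤ a) {m n : ℕ} (hm : 2 ≤ m) (hn : 2 ≤ n) :
    lucasSeq a 1 m + lucasSeq a 1 n + 1 ≤ lucasSeq a 1 (m + n) := by
  wlog h : n ≤ m generalizing m n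
  · have := this hn hm (by omega)
    rw [add_comm n m] at this
    omega
  obtain ⟨p, rfl⟩ := Nat.exists_eq_add_of_le' (show 1 ≤ m by omega)
  have h1 := lucasSeq_add_le ha p
  have h2 := lucasSeq_add_le ha (p + 1)
  have h3 := lucasSeq_mono ha (by omega) (show p + 1 + 2 ≤ p + 1 + n by omega)
  have h4 := lucasSeq_mono ha (by omega) h
  have h5 := lucasSeq_pos ha p
  simp only [add_assoc, Nat.reduceAdd] at *
  omega

lemma sum_lucasSeq_le {ι : Type*} {a : ℕ} (ha : 1 ≤ a) (g : ι → ℕ) (s : Finset ι)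
    (hs : s.Nonempty) (hg : ∀ i ∈ s, 4 ≤ g i) :
    ∑ i ∈ s, (lucasSeq a 1 (g i) + 1) ≤ lucasSeq a 1 (∑ i ∈ s, g i) + 1 := by
  induction hs using Finset.Nonempty.cons_induction with
  | singleton i => simp
  | cons i s hi hs ih =>
    rw [Finset.sum_cons, Finset.sum_cons]
    have h1 := ih fun j hj => hg j (Finset.mem_cons_of_mem hj)
    have h2 : 4 ≤ ∑ j ∈ s, g j := by
      obtain ⟨j, hj⟩ := hs
      exact (hg j (Finset.mem_cons_of_mem hj)).trans
        (Finset.single_le_sum (fun _ _ => Nat.zero_le _) hj)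
    have h3 := hg i (Finset.mem_cons_self i s)
    have := lucasSeq_superadditive ha (show 2 ≤ g i by omega) (show 2 ≤ ∑ j ∈ s, g j by omega)
    omega

lemma sub_mod_eq_iff {m : ℕ} (i j : Fin (m + 3)) :
    ((j.val + (m + 3) - i.val) % (m + 3) = 1 ↔ j = i + 1) ∧
    ((j.val + (m + 3) - i.val) % (m + 3) = 2 ↔ j = i + 1 + 1) := by
  have hsub : (j - i).val = (j.val + (m + 3) - i.val) % (m + 3) := by
    rw [Fin.val_sub]
    congr 1
    omega
  have h2 : ((1 : Fin (m + 3)) + 1).val = 2 := by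
    rw [Fin.val_add]
    simp
  rw [← hsub]
  constructor
  · rw [← sub_eq_iff_eq_add', Fin.ext_iff]
    simp
  · rw [add_assoc, ← sub_eq_iff_eq_add', Fin.ext_iff, h2]

lemma GnkMult_eq_circMult (m k : ℕ) : GnkMult (m + 3) k = circMult m (k - 1) 1 := by
  ext i j
  simp only [GnkMult, circMult, (sub_mod_eq_iff i j).1, (sub_mod_eq_iff i j).2]

lemma Gnk'Mult_eq_circMult (m k : ℕ) : Gnk'Mult (m + 3) k = circMult m 1 (k - 1) := by
  ext i j
  simp only [Gnk'Mult, circMult, (sub_mod_eq_iff i j).1, (sub_mod_eq_iff i j).2]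

lemma sum_permWeight_le_of_equiv {V W : Type*} [Fintype V] [DecidableEq V] [Fintype W]
    [DecidableEq W] {p : V → Prop} (e : {u // p u} ≃ W) {G : V → V → ℕ} {H : W → W → ℕ}
    (h : ∀ u w : {u // p u}, G u.1 w.1 = H (e u) (e w)) {A : Finset (Equiv.Perm V)}
    (hA : ∀ σ ∈ A, σ ≠ 1 ∧ ∀ u, σ u ≠ u → p u) :
    ∑ σ ∈ A, permWeight G σ ≤
    ∑ τ ∈ Finset.univ.filter (fun τ : Equiv.Perm W => τ ≠ 1), permWeight H τ := by
  have hw : ∀ τ : Equiv.Perm W, permWeight G (τ.extendDomain e.symm) = permWeight H τ := by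
    intro τ
    rw [permWeight, Equiv.Perm.support_extend_domain, Finset.prod_map, permWeight]
    refine Finset.prod_congr rfl fun w _ => ?_
    have : (Equiv.asEmbedding e.symm) w = ((e.symm w : {u // p u}) : V) := rfl
    rw [this, Equiv.Perm.extendDomain_apply_image, h]
    simp
  have hinj : Function.Injective fun τ : Equiv.Perm W => τ.extendDomain e.symm :=
    Equiv.Perm.extendDomainHom_injective e.symm
  rw [← Finset.sum_congr rfl fun τ _ => hw τ,
    ← Finset.sum_image (f := permWeight G) (g := fun τ : Equiv.Perm W => τ.extendDomain e.symm)
      hinj.injOn]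
  refine Finset.sum_le_sum_of_subset fun σ hσ => ?_
  obtain ⟨h1, h2⟩ := hA σ hσ
  have hp : ∀ u, p (σ u) ↔ p u := by
    intro u
    by_cases hu : σ u = u
    · rw [hu]
    · exact ⟨fun _ => h2 u hu, fun _ => h2 _ fun hc => hu (σ.injective hc)⟩
  have heq : (e.permCongr (σ.subtypePerm hp)).extendDomain e.symm = σ := by
    ext u
    by_cases hu : p u
    · rw [Equiv.Perm.extendDomain_apply_subtype _ _ hu]
      simp
    · rw [Equiv.Perm.extendDomain_apply_not_subtype _ _ hu]
      by_contra hc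
      exact hu (h2 u (Ne.symm hc))
  refine Finset.mem_image.2 ⟨e.permCongr (σ.subtypePerm hp), ?_, heq⟩
  refine Finset.mem_filter.2 ⟨Finset.mem_univ _, fun hc => h1 ?_⟩
  rw [← heq, hc]
  exact Equiv.Perm.extendDomain_one _

lemma sum_biUnion_le {ι α : Type*} [DecidableEq α] (s : Finset ι) (t : ι → Finset α) (w : α → ℕ) :
    ∑ x ∈ s.biUnion t, w x ≤ ∑ i ∈ s, ∑ x ∈ t i, w x := by
  induction s using Finset.cons_induction with
  | empty => simp
  | cons i s hi ih =>
    rw [Finset.cons_eq_insert, Finset.biUnion_insert, Finset.sum_insert hi]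
    have := Finset.sum_union_inter (s₁ := t i) (s₂ := s.biUnion t) (f := w)
    omega

lemma MConn_equivalence {n : ℕ} (G : Fin n → Fin n → ℕ) : Equivalence (MConn G) where
  refl _ := Relation.ReflTransGen.refl
  symm h := by
    have : Std.Symm fun a b => 0 < G a b ∨ 0 < G b a := ⟨fun _ _ => Or.symm⟩
    exact Relation.ReflTransGen.stdSymm.symm _ _ h
  trans := Relation.ReflTransGen.trans

lemma MConn_of_sameCycle {n : ℕ} {G : Fin n → Fin n → ℕ} {σ : Equiv.Perm (Fin n)}
    (hw : permWeight G σ ≠ 0) {u v : Fin n} (h : σ.SameCycle u v) : MConn G u v := by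
  have hstep : ∀ w, MConn G w (σ w) := by
    intro w
    by_cases hw' : σ w = w
    · rw [hw']
      exact (MConn_equivalence G).refl _
    · exact Relation.ReflTransGen.single (Or.inl (Nat.pos_of_ne_zero
        (Finset.prod_ne_zero_iff.1 hw w (Equiv.Perm.mem_support.2 hw'))))
  obtain ⟨i, -, -, rfl⟩ := h.exists_pow_eq
  clear h
  induction i with
  | zero => exact (MConn_equivalence G).refl _
  | succ i ih =>
    rw [pow_succ', Equiv.Perm.mul_apply]
    exact (MConn_equivalence G).trans ih (hstep _)

lemma cycleCount_le_lucasSeq {n k : ℕ} (hn : 0 < n) (hk : 2 ≤ k) (G : Fin n → Fin n → ℕ)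
    (hcomp : ∀ v : Fin n, ∃ m, 4 ≤ m ∧
      ∃ e : {u : Fin n // MConn G v u} ≃ Fin m,
        (∀ u w : {u : Fin n // MConn G v u}, G u.1 w.1 = GnkMult m k (e u) (e w)) ∨
        (∀ u w : {u : Fin n // MConn G v u}, G u.1 w.1 = Gnk'Mult m k (e u) (e w))) :
    cycleCount n G ≤ lucasSeq (k - 1) 1 n + 1 := by
  let c : Fin n → Finset (Fin n) := fun v => Finset.univ.filter (MConn G v)
  have hc : ∀ u v, c u = c v ↔ MConn G v u := by
    intro u v
    constructor
    · intro h
      have : u ∈ c u := by simpa [c] using (MConn_equivalence G).refl u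
      rw [h] at this
      simpa [c] using this
    · intro h
      ext w
      simp only [c, Finset.mem_filter, Finset.mem_univ, true_and]
      exact ⟨fun hw => (MConn_equivalence G).trans h hw,
        fun hw => (MConn_equivalence G).trans ((MConn_equivalence G).symm h) hw⟩
  have hcard : ∀ v, 4 ≤ (c v).card ∧
      ∑ σ ∈ Finset.univ.filter (fun σ : Equiv.Perm (Fin n) => σ ≠ 1 ∧ ∀ u, σ u ≠ u → u ∈ c v),
        permWeight G σ ≤ lucasSeq (k - 1) 1 (c v).card + 1 := by
    intro v
    obtain ⟨m, hm, e, he⟩ := hcomp v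
    have hcm : (c v).card = m := by
      rw [← Fintype.card_subtype, Fintype.card_congr e, Fintype.card_fin]
    refine ⟨hcm ▸ hm, ?_⟩
    rw [hcm]
    have hmem : ∀ u, u ∈ c v ↔ MConn G v u := fun u => by simp [c]
    obtain ⟨m, rfl⟩ := Nat.exists_eq_add_of_le' (show 3 ≤ m by omega)
    rcases he with he | he
    · rw [GnkMult_eq_circMult] at he
      refine (sum_permWeight_le_of_equiv e he fun σ hσ => ?_).trans ?_
      · simpa [hmem] using hσ
      simpa using sum_permWeight_circMult_le m (k - 1) 1
    · rw [Gnk'Mult_eq_circMult] at he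
      refine (sum_permWeight_le_of_equiv e he fun σ hσ => ?_).trans ?_
      · simpa [hmem] using hσ
      exact (sum_permWeight_circMult_le m 1 (k - 1)).trans
        (lucasSeq_one_add_pow_le (by omega) m)
  have hloop : ∀ v, G v v = 0 := by
    intro v
    obtain ⟨m, hm, e, he⟩ := hcomp v
    have hv := (MConn_equivalence G).refl v
    rcases he with he | he
    · rw [he ⟨v, hv⟩ ⟨v, hv⟩]
      simp [GnkMult]
    · rw [he ⟨v, hv⟩ ⟨v, hv⟩]
      simp [Gnk'Mult]
  have hn' : n = ∑ s ∈ Finset.univ.image c, s.card := by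
    conv_lhs => rw [← Fintype.card_fin n, ← Finset.card_univ,
      Finset.card_eq_sum_card_image c Finset.univ]
    refine Finset.sum_congr rfl fun s hs => ?_
    obtain ⟨v, -, rfl⟩ := Finset.mem_image.1 hs
    simp only [hc]
    rfl
  rw [cycleCount_eq, Finset.sum_eq_zero fun v _ => hloop v, zero_add]
  calc ∑ σ ∈ Finset.univ.filter (fun σ : Equiv.Perm (Fin n) => σ.IsCycle), permWeight G σ
      ≤ ∑ σ ∈ (Finset.univ.image c).biUnion (fun s => Finset.univ.filter
          fun σ : Equiv.Perm (Fin n) => σ ≠ 1 ∧ ∀ u, σ u ≠ u → u ∈ s), permWeight G σ := by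
        refine Finset.sum_le_sum_of_ne_zero fun σ hσ h0 => ?_
        have hσ : σ.IsCycle := (Finset.mem_filter.1 hσ).2
        obtain ⟨x, hx, hxy⟩ := id hσ
        refine Finset.mem_biUnion.2 ⟨c x, Finset.mem_image_of_mem _ (Finset.mem_univ _), ?_⟩
        simp only [Finset.mem_filter, Finset.mem_univ, true_and, c]
        exact ⟨hσ.ne_one, fun u hu => MConn_of_sameCycle h0 (hxy hu)⟩
    _ ≤ ∑ s ∈ Finset.univ.image c, ∑ σ ∈ Finset.univ.filter
          (fun σ : Equiv.Perm (Fin n) => σ ≠ 1 ∧ ∀ u, σ u ≠ u → u ∈ s), permWeight G σ :=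
        sum_biUnion_le _ _ _
    _ ≤ ∑ s ∈ Finset.univ.image c, (lucasSeq (k - 1) 1 s.card + 1) := by
        refine Finset.sum_le_sum fun s hs => ?_
        obtain ⟨v, -, rfl⟩ := Finset.mem_image.1 hs
        exact (hcard v).2
    _ ≤ lucasSeq (k - 1) 1 (∑ s ∈ Finset.univ.image c, s.card) + 1 := by
        refine sum_lucasSeq_le (by omega) _ _ ⟨c ⟨0, hn⟩, by simp⟩ fun s hs => ?_
        obtain ⟨v, -, rfl⟩ := Finset.mem_image.1 hs
        exact (hcard v).1
    _ = lucasSeq (k - 1) 1 n + 1 := by rw [← hn']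

theorem stmt_4 (n k : ℕ) (hn : 4 ≤ n) (hk : 2 ≤ k) (G : Fin n → Fin n → ℕ)
    (hcomp : ∀ v : Fin n, ∃ m, 4 ≤ m ∧
      ∃ e : {u : Fin n // MConn G v u} ≃ Fin m,
        (∀ u w : {u : Fin n // MConn G v u}, G u.1 w.1 = GnkMult m k (e u) (e w)) ∨
        (∀ u w : {u : Fin n // MConn G v u}, G u.1 w.1 = Gnk'Mult m k (e u) (e w))) :
    cycleCount n G ≤ (k - 1) * Fk k (n - 1) + Fk k (n - 2) := by
  obtain ⟨m, rfl⟩ := Nat.exists_eq_add_of_le' (show 2 ≤ n by omega)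
  refine (cycleCount_le_lucasSeq (by omega) hk G hcomp).trans ?_
  change (k - 1) * lucasSeq (k - 1) 1 (m + 1) + 1 * lucasSeq (k - 1) 1 m + 1 ≤
    (k - 1) * Fk k (m + 1) + Fk k m
  have h1 := lucasSeq_le_Fk hk (show 2 ≤ m + 1 by omega)
  have h2 := lucasSeq_le_Fk hk (show 2 ≤ m by omega)
  rcases Nat.even_or_odd m with hm | hm
  · have h3 := Nat.mul_le_mul_left (k - 1)
      (lucasSeq_add_one_le_Fk hk (show 2 ≤ m + 1 by omega) hm.add_one)
    rw [mul_add] at h3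
    omega
  · have h3 := lucasSeq_add_one_le_Fk hk (show 2 ≤ m by omega) hm
    have h4 := Nat.mul_le_mul_left (k - 1) h1
    omega
end

section
/- For all integers n ≥ 0 and k ≥ 2, F_k(n) ≤ 5·α(k)^n, where α(k) = (k − 1 + √((k−1)² + 4))/2. That is, every digraph with n vertices, every vertex of outdegree exactly k, and every multi-edge between distinct vertices of multiplicity at most k−1 has at most 5·α(k)^n directed cycles. -/
open scoped Classical
open Finset

namespace PathWeight

variable {V : Type*} [DecidableEq V]

/-- Total weight of the paths with at most `m` interior vertices, see `pathWt`. -/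
noncomputable def pathWtAux (G : V → V → ℝ) (t : V) : ℕ → Finset V → V → ℝ
  | 0, _, s => G s t
  | m + 1, X, s => G s t + ∑ y ∈ X, G s y * pathWtAux G t m (X.erase y) y

/-- Total weight of the simple paths from `s` to `t` with interior vertices in `X`. -/
noncomputable def pathWt (G : V → V → ℝ) (t : V) (X : Finset V) (s : V) : ℝ :=
  pathWtAux G t X.card X s

theorem pathWt_eq (G : V → V → ℝ) (t : V) (X : Finset V) (s : V) :
    pathWt G t X s = G s t + ∑ y ∈ X, G s y * pathWt G t (X.erase y) y := by
  unfold pathWt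
  rcases h : X.card with _ | m
  · rw [card_eq_zero] at h
    simp [h, pathWtAux]
  · rw [pathWtAux]
    congr 1
    refine sum_congr rfl fun y hy => ?_
    rw [card_erase_of_mem hy, h, Nat.add_sub_cancel]

theorem pathWt_nonneg {G : V → V → ℝ} (hG : ∀ u v, 0 ≤ G u v) (t : V) (X : Finset V) (s : V) :
    0 ≤ pathWt G t X s := by
  induction X using Finset.strongInduction generalizing s with
  | H X ih =>
    rw [pathWt_eq]
    exact add_nonneg (hG _ _)
      (sum_nonneg fun y hy => mul_nonneg (hG _ _) (ih _ (erase_ssubset hy) y))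

theorem pathWt_congr {G H : V → V → ℝ} (t : V) {X : Finset V} {s s' : V} (hs : G s = H s')
    (hX : ∀ v ∈ X, G v = H v) : pathWt G t X s = pathWt H t X s' := by
  induction X using Finset.strongInduction generalizing s s' with
  | H X ih =>
    rw [pathWt_eq G, pathWt_eq H, hs]
    congr 1
    refine sum_congr rfl fun y hy => ?_
    rw [ih _ (erase_ssubset hy) (hX y hy) fun v hv => hX v (mem_of_mem_erase hv)]

/-- The weight of paths is an affine function of each row of the weight matrix. -/
theorem pathWt_affine [Fintype V] {G : V → V → ℝ} (hG : ∀ u v, 0 ≤ G u v) (t v : V)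
    (X : Finset V) (s : V) (hs : s ∉ X) :
    ∃ (A : ℝ) (B : V → ℝ), (∀ y, 0 ≤ B y) ∧
      ∀ r : V → ℝ, pathWt (Function.update G v r) t X s = A + ∑ y, r y * B y := by
  induction X using Finset.strongInduction generalizing s with
  | H X ih =>
    rcases eq_or_ne s v with rfl | hsv
    · refine ⟨0, fun y => (if y = t then 1 else 0) + if y ∈ X then pathWt G t (X.erase y) y else 0,
        fun y => ?_, fun r => ?_⟩
      · have := pathWt_nonneg hG t (X.erase y) y
        dsimp only
        split_ifs <;> linarith
      · rw [pathWt_eq]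
        simp only [Function.update_self, mul_add, sum_add_distrib, mul_ite, mul_one, mul_zero,
          sum_ite_eq', mem_univ, if_true, zero_add, sum_ite_mem, univ_inter]
        congr 1
        refine sum_congr rfl fun y hy => ?_
        congr 1
        have hne : ∀ z ∈ X, Function.update G s r z = G z := fun z hz =>
          Function.update_of_ne (by rintro rfl; exact hs hz) _ _
        exact pathWt_congr t (hne y hy) fun z hz => hne z (mem_of_mem_erase hz)
    · choose! A B hB h using fun y (hy : y ∈ X) => ih _ (erase_ssubset hy) y (notMem_erase y X)
      refine ⟨G s t + ∑ y ∈ X, G s y * A y, fun z => ∑ y ∈ X, G s y * B y z,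
        fun z => sum_nonneg fun y hy => mul_nonneg (hG _ _) (hB y hy z), fun r => ?_⟩
      rw [pathWt_eq, Function.update_of_ne hsv, add_assoc]
      congr 1
      simp only [mul_sum]
      rw [sum_comm, ← sum_add_distrib]
      refine sum_congr rfl fun y hy => ?_
      rw [h y hy, mul_add, mul_sum]
      congr 1
      exact sum_congr rfl fun z _ => by ring

/-- Paths from `s` to `t` either avoid `a`, or enter it through exactly one vertex `x`; in the
latter case `x` may be merged with `a`. -/
theorem pathWt_le_center {G : V → V → ℝ} (hG : ∀ u v, 0 ≤ G u v) (t a : V) (X : Finset V) (s : V)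
    (hs : s ∉ X) (ha : a ∈ X) :
    pathWt G t X s ≤ pathWt G t (X.erase a) s +
      ∑ x ∈ insert s (X.erase a), G x a * pathWt (Function.update G x (G a)) t (X.erase a) s := by
  induction X using Finset.strongInduction generalizing s with
  | H X ih =>
    have hsa : s ∉ X.erase a := fun h => hs (mem_of_mem_erase h)
    rw [sum_insert hsa]
    have hU : ∀ x, ∀ u v, 0 ≤ Function.update G x (G a) u v := fun x u v => by
      rcases eq_or_ne u x with rfl | h
      · simpa using hG a v
      · simpa [Function.update_of_ne h] using hG u v
    have hself : ∀ Y : Finset V, ∀ x ∉ Y,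
        pathWt (Function.update G x (G a)) t Y x = pathWt G t Y a := fun Y x hx =>
      pathWt_congr t (by simp) fun v hv => Function.update_of_ne (by rintro rfl; exact hx hv) _ _
    rw [hself _ s hsa, pathWt_eq G t X s, pathWt_eq G t (X.erase a) s, ← add_sum_erase X _ ha]
    have key : ∀ y ∈ X.erase a, G s y * pathWt G t (X.erase y) y ≤
        G s y * pathWt G t ((X.erase a).erase y) y +
        ∑ x ∈ X.erase a, G x a *
          (G s y * pathWt (Function.update G x (G a)) t ((X.erase a).erase y) y) := by
      intro y hy
      have hyX := mem_of_mem_erase hy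
      have h1 := ih _ (erase_ssubset hyX) y (notMem_erase y X)
        (mem_erase.2 ⟨(ne_of_mem_erase hy).symm, ha⟩)
      rw [erase_right_comm, insert_erase hy] at h1
      refine (mul_le_mul_of_nonneg_left h1 (hG s y)).trans_eq ?_
      rw [mul_add, mul_sum]
      congr 1
      exact sum_congr rfl fun z _ => by ring
    have h2 := sum_le_sum key
    rw [sum_add_distrib, sum_comm] at h2
    have h3 : ∑ x ∈ X.erase a, ∑ y ∈ X.erase a, G x a *
          (G s y * pathWt (Function.update G x (G a)) t ((X.erase a).erase y) y) ≤
        ∑ x ∈ X.erase a, G x a * pathWt (Function.update G x (G a)) t (X.erase a) s := by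
      refine sum_le_sum fun x hx => ?_
      rw [← mul_sum]
      refine mul_le_mul_of_nonneg_left ?_ (hG x a)
      have hsx : s ≠ x := fun h => hsa (h ▸ hx)
      rw [pathWt_eq _ t (X.erase a) s, Function.update_of_ne hsx]
      linarith [hG s t]
    linarith

/-- The weights in which `v` has an arc of weight `K` to `(R v).1` and one of weight `1` to
`(R v).2`. -/
noncomputable def extremeWt (K : ℝ) (R : V → V × V) (v y : V) : ℝ :=
  (if y = (R v).1 then K else 0) + if y = (R v).2 then 1 else 0

theorem extremeWt_nonneg {K : ℝ} (hK : 0 ≤ K) (R : V → V × V) (u v : V) :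
    0 ≤ extremeWt K R u v := by
  unfold extremeWt
  split_ifs <;> linarith

theorem extremeWt_update (K : ℝ) (R : V → V × V) (x a : V) :
    Function.update (extremeWt K R) x (extremeWt K R a) =
      extremeWt K (Function.update R x (R a)) := by
  funext u v
  rcases eq_or_ne u x with rfl | h
  · simp [extremeWt]
  · simp [extremeWt, Function.update_of_ne h]

/-- A linear functional on rows bounded by `K` with sum at most `K + 1` is maximised at an extreme
row. -/
theorem exists_sum_mul_le [Fintype V] [Nontrivial V] {K : ℝ} {r B : V → ℝ}
    (hB : ∀ y, 0 ≤ B y) (hr : ∀ y, 0 ≤ r y) (hrK : ∀ y, r y ≤ K) (hsum : ∑ y, r y ≤ K + 1) :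
    ∃ p : V × V, p.1 ≠ p.2 ∧
      ∑ y, r y * B y ≤ ∑ y, ((if y = p.1 then K else 0) + if y = p.2 then 1 else 0) * B y := by
  obtain ⟨a, -, ha⟩ := exists_max_image (univ : Finset V) B univ_nonempty
  obtain ⟨b', hb'⟩ := exists_ne a
  obtain ⟨b, hb, hbm⟩ := exists_max_image ((univ : Finset V).erase a) B
    ⟨b', mem_erase.2 ⟨hb', mem_univ _⟩⟩
  refine ⟨(a, b), (ne_of_mem_erase hb).symm, ?_⟩
  have h1 : ∑ y ∈ univ.erase a, r y * B y ≤ (∑ y ∈ univ.erase a, r y) * B b := by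
    rw [sum_mul]
    exact sum_le_sum fun y hy => mul_le_mul_of_nonneg_left (hbm y hy) (hr y)
  have h2 := add_sum_erase univ r (mem_univ a)
  rw [← add_sum_erase univ _ (mem_univ a)]
  simp only [add_mul, ite_mul, zero_mul, one_mul, sum_add_distrib, sum_ite_eq', mem_univ, if_true]
  have h3 : (∑ y ∈ univ.erase a, r y) * B b ≤ (K + 1 - r a) * B b :=
    mul_le_mul_of_nonneg_right (by linarith) (hB b)
  nlinarith [hrK a, ha b (mem_univ b), mul_nonneg (sub_nonneg.2 (hrK a))
    (sub_nonneg.2 (ha b (mem_univ b)))]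

theorem exists_pathWt_le_extremeWt [Fintype V] [Nontrivial V] {K : ℝ} (hK : 1 ≤ K) {G : V → V → ℝ}
    (hG : ∀ u v, 0 ≤ G u v) (hGK : ∀ u v, G u v ≤ K) (hsum : ∀ u, ∑ v, G u v ≤ K + 1) (t : V)
    (X : Finset V) (s : V) (hs : s ∉ X) :
    ∃ R : V → V × V, (∀ v, (R v).1 ≠ (R v).2) ∧
      pathWt G t X s ≤ pathWt (extremeWt K R) t X s := by
  suffices h : ∀ S : Finset V, ∃ R : V → V × V, (∀ v, (R v).1 ≠ (R v).2) ∧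
      pathWt G t X s ≤ pathWt (fun v => if v ∈ S then extremeWt K R v else G v) t X s by
    simpa using h univ
  intro S
  induction S using Finset.induction_on with
  | empty =>
    obtain ⟨a, b, hab⟩ := exists_pair_ne V
    exact ⟨fun _ => (a, b), fun _ => hab, by simp⟩
  | insert v S hv ih =>
    obtain ⟨R, hR, hle⟩ := ih
    set H : V → V → ℝ := fun v => if v ∈ S then extremeWt K R v else G v with hH
    have hH0 : ∀ u v, 0 ≤ H u v := fun u w => by
      simp only [hH]
      split_ifs
      exacts [extremeWt_nonneg (by linarith) R u w, hG u w]
    obtain ⟨A, B, hB, hAB⟩ := pathWt_affine hH0 t v X s hs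
    obtain ⟨p, hp, hpB⟩ := exists_sum_mul_le hB (hG v) (hGK v) (hsum v)
    refine ⟨Function.update R v p, fun w => ?_, hle.trans ?_⟩
    · rcases eq_or_ne w v with rfl | h
      · simpa using hp
      · simpa [Function.update_of_ne h] using hR w
    · have e1 : H = Function.update H v (G v) := by
        rw [eq_comm, Function.update_eq_self_iff]
        simp [hH, hv]
      have e2 : (fun w => if w ∈ insert v S then extremeWt K (Function.update R v p) w else G w) =
          Function.update H v
            (fun y => (if y = p.1 then K else 0) + if y = p.2 then 1 else 0) := by
        funext w y
        rcases eq_or_ne w v with rfl | h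
        · simp [extremeWt]
        · by_cases hw : w ∈ S <;> simp [hw, extremeWt, hH, h]
      rw [e2, hAB]
      nth_rewrite 1 [e1]
      rw [hAB]
      linarith

/-- The value of a row with targets `p` relative to the set `S` of available vertices: `α` if both
targets are available, `β` or `γ` if only the first or only the second one is, and `1` otherwise. -/
noncomputable def rowVal (α β γ : ℝ) (p : V × V) (S : Finset V) : ℝ :=
  if p.1 ∈ S then if p.2 ∈ S then α else β else if p.2 ∈ S then γ else 1

/-- The value of the vertex `v`. -/
noncomputable def vertVal (α β γ : ℝ) (R : V → V × V) (S : Finset V) (v : V) : ℝ :=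
  rowVal α β γ (R v) (S.erase v)

/-- The values are ordered as expected. -/
structure ValOrder (α β γ : ℝ) : Prop where
  one_le_fst : 1 ≤ β
  one_le_snd : 1 ≤ γ
  fst_le : β ≤ α
  snd_le : γ ≤ α

section values

variable {α β γ : ℝ} (h : ValOrder α β γ)
include h

theorem ValOrder.one_le : 1 ≤ α := h.one_le_fst.trans h.fst_le

theorem one_le_rowVal (p : V × V) (S : Finset V) : 1 ≤ rowVal α β γ p S := by
  have := h.one_le_fst; have := h.one_le_snd; have := h.one_le
  unfold rowVal
  split_ifs <;> linarith

theorem rowVal_le (p : V × V) (S : Finset V) : rowVal α β γ p S ≤ α := by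
  have := h.fst_le; have := h.snd_le; have := h.one_le
  unfold rowVal
  split_ifs <;> linarith

theorem rowVal_mono (p : V × V) {S S' : Finset V} (hS : S' ⊆ S) :
    rowVal α β γ p S' ≤ rowVal α β γ p S := by
  have := h.fst_le; have := h.snd_le; have := h.one_le
  have := h.one_le_fst; have := h.one_le_snd
  have h1 := @hS p.1
  have h2 := @hS p.2
  unfold rowVal
  split_ifs <;> first | linarith | (exfalso; tauto)

theorem one_le_vertVal (R : V → V × V) (S : Finset V) (v : V) : 1 ≤ vertVal α β γ R S v :=
  one_le_rowVal h _ _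

theorem vertVal_le (R : V → V × V) (S : Finset V) (v : V) : vertVal α β γ R S v ≤ α :=
  rowVal_le h _ _

theorem vertVal_mono (R : V → V × V) {S S' : Finset V} (hS : S' ⊆ S) (v : V) :
    vertVal α β γ R S' v ≤ vertVal α β γ R S v :=
  rowVal_mono h _ (erase_subset_erase v hS)

theorem vertVal_nonneg (R : V → V × V) (S : Finset V) (v : V) : 0 ≤ vertVal α β γ R S v :=
  zero_le_one.trans (one_le_vertVal h R S v)

theorem one_le_prod_vertVal (R : V → V × V) (S Y : Finset V) :
    1 ≤ ∏ v ∈ Y, vertVal α β γ R S v := by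
  refine (prod_const_one (s := Y)).symm.le.trans
    (prod_le_prod (fun _ _ => zero_le_one) fun v _ => one_le_vertVal h R S v)

theorem prod_vertVal_nonneg (R : V → V × V) (S Y : Finset V) :
    0 ≤ ∏ v ∈ Y, vertVal α β γ R S v :=
  zero_le_one.trans (one_le_prod_vertVal h R S Y)

theorem prod_vertVal_mono (R : V → V × V) {S S' : Finset V} (hS : S' ⊆ S) (Y : Finset V) :
    ∏ v ∈ Y, vertVal α β γ R S' v ≤ ∏ v ∈ Y, vertVal α β γ R S v :=
  prod_le_prod (fun v _ => vertVal_nonneg h R S' v) fun v _ => vertVal_mono h R hS v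

/-- If all vertices of `L` lose a factor `q` then the product of the values loses `q ^ #L`. -/
theorem prod_vertVal_le_pow (R : V → V × V) {S S' : Finset V} (hS : S' ⊆ S) {L Y : Finset V}
    (hL : L ⊆ Y) {q : ℝ} (hq : ∀ v ∈ L, vertVal α β γ R S' v ≤ q * vertVal α β γ R S v) :
    ∏ v ∈ Y, vertVal α β γ R S' v ≤ q ^ #L * ∏ v ∈ Y, vertVal α β γ R S v := by
  have e : q ^ #L = ∏ v ∈ Y, if v ∈ L then q else 1 := by
    rw [prod_ite_mem, inter_eq_right.2 hL, prod_const]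
  rw [e, ← prod_mul_distrib]
  refine prod_le_prod (fun v _ => vertVal_nonneg h R S' v) fun v _ => ?_
  split_ifs with hv
  · exact hq v hv
  · simpa using vertVal_mono h R hS v

/-- One vertex `z` loses a factor `q`. -/
theorem prod_vertVal_le_mul (R : V → V × V) {S S' : Finset V} (hS : S' ⊆ S) {Y : Finset V} {z : V}
    (hz : z ∈ Y) {q : ℝ} (hq : vertVal α β γ R S' z ≤ q * vertVal α β γ R S z) :
    ∏ v ∈ Y, vertVal α β γ R S' v ≤ q * ∏ v ∈ Y, vertVal α β γ R S v := by
  simpa using prod_vertVal_le_pow h R hS (singleton_subset_iff.2 hz) (q := q)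
    (fun v hv => by rwa [mem_singleton.1 hv])

end values

/-- The weight of the paths from `y` to `t` through `X`, where `y` is a vertex of `X` or `t`. -/
noncomputable def stepWt (K : ℝ) (R : V → V × V) (t : V) (X : Finset V) (y : V) : ℝ :=
  if y = t then 1 else if y ∈ X then pathWt (extremeWt K R) t (X.erase y) y else 0

theorem pathWt_extremeWt (K : ℝ) (R : V → V × V) {t : V} {X : Finset V} (ht : t ∉ X) (s : V) :
    pathWt (extremeWt K R) t X s =
      K * stepWt K R t X (R s).1 + stepWt K R t X (R s).2 := by
  have key : ∀ a : V, stepWt K R t X a = (if t = a then 1 else 0) +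
      ∑ y ∈ X, (if y = a then 1 else 0) * pathWt (extremeWt K R) t (X.erase y) y := by
    intro a
    simp only [ite_mul, one_mul, zero_mul, sum_ite_eq']
    unfold stepWt
    rcases eq_or_ne a t with rfl | h
    · simp [ht]
    · simp [h, h.symm]
  rw [pathWt_eq, key, key, mul_add, mul_sum, add_add_add_comm, ← sum_add_distrib]
  congr 1
  · simp [extremeWt]
  · refine sum_congr rfl fun y _ => ?_
    rw [extremeWt, add_mul, ← mul_assoc, mul_ite, mul_one, mul_zero]

theorem stepWt_of_mem {K : ℝ} {R : V → V × V} {t : V} {X : Finset V} (ht : t ∉ X) {y : V}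
    (hy : y ∈ X) : stepWt K R t X y = pathWt (extremeWt K R) t (X.erase y) y := by
  rw [stepWt, if_neg (by rintro rfl; exact ht hy), if_pos hy]

theorem stepWt_self {K : ℝ} {R : V → V × V} {t : V} {X : Finset V} : stepWt K R t X t = 1 :=
  if_pos rfl

theorem stepWt_of_notMem {K : ℝ} {R : V → V × V} {t : V} {X : Finset V} {y : V}
    (hy : y ∉ insert t X) : stepWt K R t X y = 0 := by
  rw [mem_insert, not_or] at hy
  rw [stepWt, if_neg hy.1, if_neg hy.2]

/-- The bound on the weight of paths with interior vertices in `Y`. -/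
def Bounded (K c α β γ : ℝ) (t : V) (Y : Finset V) : Prop :=
  ∀ R : V → V × V, (∀ v, (R v).1 ≠ (R v).2) → ∀ s ∉ Y, s ≠ t →
    pathWt (extremeWt K R) t Y s ≤ c * ∏ v ∈ insert s Y, vertVal α β γ R (insert t Y) v

section bounds

variable {K c α β γ : ℝ} {t : V} {X : Finset V} {R : V → V × V}

theorem pathWt_erase_le (hR : ∀ v, (R v).1 ≠ (R v).2) (ht : t ∉ X) {y : V} (hy : y ∈ X)
    (hB : Bounded K c α β γ t (X.erase y)) :
    pathWt (extremeWt K R) t (X.erase y) y ≤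
      c * ∏ v ∈ X, vertVal α β γ R ((insert t X).erase y) v := by
  have hyt : t ≠ y := by rintro rfl; exact ht hy
  have := hB R hR y (notMem_erase y X) hyt.symm
  rwa [insert_erase hy, ← erase_insert_of_ne hyt] at this

theorem stepWt_le (h : ValOrder α β γ) (hc : 1 ≤ c) (hR : ∀ v, (R v).1 ≠ (R v).2) (ht : t ∉ X)
    (hB : ∀ Y ⊂ X, Bounded K c α β γ t Y) (y : V) :
    stepWt K R t X y ≤ c * ∏ v ∈ X, vertVal α β γ R (insert t X) v := by
  have h1 := one_le_prod_vertVal h R (insert t X) X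
  by_cases hyt : y = t
  · rw [hyt, stepWt_self]
    nlinarith
  by_cases hy : y ∈ X
  · rw [stepWt_of_mem ht hy]
    refine (pathWt_erase_le hR ht hy (hB _ (erase_ssubset hy))).trans ?_
    exact mul_le_mul_of_nonneg_left (prod_vertVal_mono h R (erase_subset _ _) X) (by linarith)
  · rw [stepWt_of_notMem (by simp [hyt, hy])]
    nlinarith

/-- Merging the vertex `z` into its in-neighbours. -/
theorem pathWt_erase_le_center (hK : 0 ≤ K) (hR : ∀ v, (R v).1 ≠ (R v).2) (ht : t ∉ X) {y z : V}
    (hy : y ∈ X) (hz : z ∈ X) (hyz : y ≠ z)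
    (hB : Bounded K c α β γ t ((X.erase y).erase z)) :
    pathWt (extremeWt K R) t (X.erase y) y ≤
      c * ∏ v ∈ X.erase z, vertVal α β γ R (((insert t X).erase y).erase z) v +
      ∑ x ∈ X.erase z, extremeWt K R x z *
        (c * (rowVal α β γ (R z) ((((insert t X).erase y).erase z).erase x) *
          ∏ v ∈ (X.erase z).erase x, vertVal α β γ R (((insert t X).erase y).erase z) v)) := by
  have hyt : t ≠ y := by rintro rfl; exact ht hy
  have hzt : t ≠ z := by rintro rfl; exact ht hz
  have hset : insert y ((X.erase y).erase z) = X.erase z := by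
    rw [erase_right_comm, insert_erase (mem_erase.2 ⟨hyz, hy⟩)]
  have hS : insert t ((X.erase y).erase z) = ((insert t X).erase y).erase z := by
    rw [erase_insert_of_ne hyt, erase_insert_of_ne hzt]
  have hyn : y ∉ (X.erase y).erase z := by simp
  have h1 := pathWt_le_center (extremeWt_nonneg hK R) t z (X.erase y) y (notMem_erase _ _)
    (mem_erase.2 ⟨hyz.symm, hz⟩)
  rw [hset] at h1
  refine h1.trans (add_le_add ?_ (sum_le_sum fun x hx => ?_))
  · have := hB R hR y hyn hyt.symm
    rwa [hset, hS] at this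
  · refine mul_le_mul_of_nonneg_left ?_ (extremeWt_nonneg hK R _ _)
    rw [extremeWt_update]
    have hR' : ∀ v, (Function.update R x (R z) v).1 ≠ (Function.update R x (R z) v).2 := by
      intro v
      rcases eq_or_ne v x with rfl | hv
      · simpa using hR z
      · simpa [Function.update_of_ne hv] using hR v
    have := hB _ hR' y hyn hyt.symm
    rw [hset, hS, ← mul_prod_erase _ _ hx] at this
    refine this.trans_eq ?_
    congr 2
    · simp [vertVal]
    · refine prod_congr rfl fun v hv => ?_
      simp [vertVal, Function.update_of_ne (ne_of_mem_erase hv)]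

theorem pathWt_erase_le_of_forall (hK : 0 ≤ K) (hR : ∀ v, (R v).1 ≠ (R v).2) (ht : t ∉ X)
    {y z : V} (hy : y ∈ X) (hz : z ∈ X) (hyz : y ≠ z)
    (hB : Bounded K c α β γ t ((X.erase y).erase z))
    (hin : ∀ x ∈ X.erase z, (R x).1 ≠ z ∧ (R x).2 ≠ z) :
    pathWt (extremeWt K R) t (X.erase y) y ≤
      c * ∏ v ∈ X.erase z, vertVal α β γ R (((insert t X).erase y).erase z) v := by
  refine (pathWt_erase_le_center hK hR ht hy hz hyz hB).trans_eq ?_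
  rw [add_eq_left]
  refine sum_eq_zero fun x hx => ?_
  rw [extremeWt, if_neg (hin x hx).1.symm, if_neg (hin x hx).2.symm]
  ring

theorem pathWt_erase_le_single (hK : 0 ≤ K) (h : ValOrder α β γ) (hc : 1 ≤ c)
    (hR : ∀ v, (R v).1 ≠ (R v).2) (ht : t ∉ X) (hB : ∀ Y ⊂ X, Bounded K c α β γ t Y) {y : V}
    (hy : y ∈ X) :
    pathWt (extremeWt K R) t (X.erase y) y ≤
      (K * (if (R y).1 ∈ (insert t X).erase y then 1 else 0) +
        if (R y).2 ∈ (insert t X).erase y then 1 else 0) *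
      (c * ∏ v ∈ X.erase y, vertVal α β γ R ((insert t X).erase y) v) := by
  have hyt : t ≠ y := by rintro rfl; exact ht hy
  have ht' : t ∉ X.erase y := fun h => ht (mem_of_mem_erase h)
  have hB' : ∀ Y ⊂ X.erase y, Bounded K c α β γ t Y := fun Y hY =>
    hB Y (hY.trans (erase_ssubset hy))
  have key : ∀ z, stepWt K R t (X.erase y) z ≤
      (if z ∈ (insert t X).erase y then 1 else 0) *
      (c * ∏ v ∈ X.erase y, vertVal α β γ R ((insert t X).erase y) v) := by
    intro z
    rw [erase_insert_of_ne hyt]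
    split_ifs with hz
    · rw [one_mul]
      exact stepWt_le h hc hR ht' hB' z
    · rw [stepWt_of_notMem hz, zero_mul]
  rw [pathWt_extremeWt K R ht', add_mul, mul_assoc]
  exact add_le_add (mul_le_mul_of_nonneg_left (key _) hK) (key _)

end bounds

section golden

variable {φ β : ℝ} {t : V} {X : Finset V} {R : V → V × V}

theorem valOrder_golden (hφ : φ ^ 2 = φ + 1) (h0 : 0 < φ) (hβ : β * φ = 2) :
    ValOrder φ β β := by
  have h1 : 1 < φ := by nlinarith
  have h2 : φ < 2 := by nlinarith
  have h3 : β ≤ φ := by nlinarith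
  have h4 : 1 ≤ β := by nlinarith
  exact ⟨h4, h4, h3, h3⟩

theorem rowVal_golden_le (hφ : φ ^ 2 = φ + 1) (h0 : 0 < φ) (hβ : β * φ = 2) {p : V × V}
    {S S' : Finset V} (hS : S' ⊆ S) {a : V} (ha : p.1 = a ∨ p.2 = a) (haS : a ∈ S) (haS' : a ∉ S') :
    rowVal φ β β p S' ≤ φ / 2 * rowVal φ β β p S := by
  have h1 : 1 < φ := by nlinarith
  have h4 : 2 * β ≤ φ * φ := by nlinarith
  have h5 : 2 ≤ φ * φ := by nlinarith
  have e1 := @hS p.1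
  have e2 := @hS p.2
  unfold rowVal
  rcases ha with rfl | rfl <;> split_ifs <;> first | nlinarith | (exfalso; tauto)

theorem pathWt_golden_le (hφ : φ ^ 2 = φ + 1) (h0 : 0 < φ) (hβ : β * φ = 2)
    (hR : ∀ v, (R v).1 ≠ (R v).2) (ht : t ∉ X) (hB : ∀ Y ⊂ X, Bounded 1 1 φ β β t Y) {a : V}
    (ha : a ∈ X) (hfull : (R a).1 ∈ (insert t X).erase a → (R a).2 ∈ (insert t X).erase a →
      ∃ x ∈ X.erase a, (R x).1 = a ∨ (R x).2 = a) :
    pathWt (extremeWt 1 R) t (X.erase a) a ≤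
      φ / 2 * ∏ v ∈ X, vertVal φ β β R (insert t X) v := by
  have h := valOrder_golden hφ h0 hβ
  have hs := pathWt_erase_le_single zero_le_one h le_rfl hR ht hB ha
  have hm := prod_vertVal_mono h R (erase_subset a (insert t X)) (X.erase a)
  have hp := prod_vertVal_nonneg h R (insert t X) (X.erase a)
  have hp' := prod_vertVal_nonneg h R ((insert t X).erase a) (X.erase a)
  rw [one_mul, one_mul] at hs
  by_cases hcase : (R a).1 ∈ (insert t X).erase a ∧ (R a).2 ∈ (insert t X).erase a
  · obtain ⟨x, hx, hxa⟩ := hfull hcase.1 hcase.2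
    have h1 := pathWt_erase_le hR ht ha (hB _ (erase_ssubset ha))
    rw [one_mul] at h1
    refine h1.trans (prod_vertVal_le_mul h R (erase_subset _ _) (mem_of_mem_erase hx) ?_)
    have hax := (ne_of_mem_erase hx).symm
    exact rowVal_golden_le hφ h0 hβ (erase_subset_erase _ (erase_subset _ _)) hxa
      (mem_erase.2 ⟨hax, mem_insert_of_mem ha⟩) (by simp)
  · rw [← mul_prod_erase X _ ha, vertVal, rowVal]
    have hβ' : φ / 2 * β = 1 := by linarith
    split_ifs at hs ⊢ <;> first
      | (rw [← mul_assoc, hβ']; linarith)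
      | (exfalso; tauto)
      | nlinarith

theorem pathWt_golden_full_le (h : ValOrder φ β β)
    (hR : ∀ v, (R v).1 ≠ (R v).2) (ht : t ∉ X) (hB : ∀ Y ⊂ X, Bounded 1 1 φ β β t Y) {a b : V}
    (ha : a ∈ X) (hb : b ∈ X) (hab : a ≠ b) (h1 : (R a).1 ∈ (insert t X).erase a)
    (h2 : (R a).2 ∈ (insert t X).erase a)
    (hin : ∀ x ∈ X.erase a, (R x).1 ≠ a ∧ (R x).2 ≠ a) :
    φ * pathWt (extremeWt 1 R) t (X.erase b) b ≤
      ∏ v ∈ X, vertVal φ β β R (insert t X) v := by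
  have hle := pathWt_erase_le_of_forall zero_le_one hR ht hb ha hab.symm
    (hB _ ((erase_subset _ _).trans_ssubset (erase_ssubset hb))) hin
  rw [one_mul] at hle
  rw [← mul_prod_erase X _ ha, vertVal, rowVal, if_pos h1, if_pos h2]
  refine mul_le_mul_of_nonneg_left (hle.trans ?_) (zero_le_one.trans h.one_le)
  exact prod_vertVal_mono h R ((erase_subset _ _).trans (erase_subset _ _)) _

theorem stepWt_golden_add_le (hφ : φ ^ 2 = φ + 1) (h0 : 0 < φ) (hβ : β * φ = 2)
    (hR : ∀ v, (R v).1 ≠ (R v).2) (ht : t ∉ X) (hB : ∀ Y ⊂ X, Bounded 1 1 φ β β t Y) {a b : V}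
    (ha : a ∈ insert t X) (hb : b ∈ X) (hab : a ≠ b) :
    stepWt 1 R t X a + stepWt 1 R t X b ≤ φ * ∏ v ∈ X, vertVal φ β β R (insert t X) v := by
  have h := valOrder_golden hφ h0 hβ
  have h1 : 1 < φ := by nlinarith
  have qa := stepWt_le h le_rfl hR ht hB a
  have qb := stepWt_le h le_rfl hR ht hB b
  rw [one_mul] at qa qb
  have hone := one_le_prod_vertVal h R (insert t X) X
  rcases mem_insert.1 ha with rfl | ha
  · rw [stepWt_self]
    have hs := pathWt_erase_le_single zero_le_one h le_rfl hR ht hB hb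
    have hm := prod_vertVal_mono h R (erase_subset b (insert a X)) (X.erase b)
    have hp := one_le_prod_vertVal h R (insert a X) (X.erase b)
    have hp' := prod_vertVal_nonneg h R ((insert a X).erase b) (X.erase b)
    rw [one_mul, one_mul] at hs
    rw [stepWt_of_mem ht hb] at qb ⊢
    rw [← mul_prod_erase X _ hb, vertVal, rowVal] at qb ⊢
    split_ifs at hs qb ⊢ <;> nlinarith
  rw [stepWt_of_mem ht hb] at qb ⊢
  rw [stepWt_of_mem ht ha] at qa ⊢
  by_cases ca : (R a).1 ∈ (insert t X).erase a → (R a).2 ∈ (insert t X).erase a →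
      ∃ x ∈ X.erase a, (R x).1 = a ∨ (R x).2 = a
  swap
  · push Not at ca
    obtain ⟨c1, c2, c3⟩ := ca
    have := pathWt_golden_full_le h hR ht hB ha hb hab c1 c2 c3
    nlinarith
  by_cases cb : (R b).1 ∈ (insert t X).erase b → (R b).2 ∈ (insert t X).erase b →
      ∃ x ∈ X.erase b, (R x).1 = b ∨ (R x).2 = b
  swap
  · push Not at cb
    obtain ⟨c1, c2, c3⟩ := cb
    have := pathWt_golden_full_le h hR ht hB hb ha hab.symm c1 c2 c3
    nlinarith
  linarith [pathWt_golden_le hφ h0 hβ hR ht hB ha ca, pathWt_golden_le hφ h0 hβ hR ht hB hb cb]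

theorem bounded_golden (hφ : φ ^ 2 = φ + 1) (h0 : 0 < φ) (hβ : β * φ = 2) (ht : t ∉ X) :
    Bounded 1 1 φ β β t X := by
  induction X using Finset.strongInduction with
  | H X ih =>
  have hB : ∀ Y ⊂ X, Bounded 1 1 φ β β t Y := fun Y hY => ih Y hY fun h => ht (hY.1 h)
  intro R hR s hs hst
  have h := valOrder_golden hφ h0 hβ
  have hone := one_le_prod_vertVal h R (insert t X) X
  have hsS : s ∉ insert t X := by simp [hst, hs]
  have q1 := stepWt_le h le_rfl hR ht hB (R s).1
  have q2 := stepWt_le h le_rfl hR ht hB (R s).2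
  rw [pathWt_extremeWt 1 R ht s, prod_insert hs, vertVal, rowVal, erase_eq_of_notMem hsS]
  have := h.one_le_fst
  by_cases h1 : (R s).1 ∈ insert t X <;> by_cases h2 : (R s).2 ∈ insert t X
  · rw [if_pos h1, if_pos h2, one_mul, one_mul]
    rcases mem_insert.1 h2 with e | h2'
    · rw [add_comm]
      refine stepWt_golden_add_le hφ h0 hβ hR ht hB h2 ?_ (hR s).symm
      exact (mem_insert.1 h1).resolve_left fun e' => hR s (e'.trans e.symm)
    · exact stepWt_golden_add_le hφ h0 hβ hR ht hB h1 h2' (hR s)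
  · rw [if_pos h1, if_neg h2, stepWt_of_notMem h2]
    nlinarith
  · rw [if_neg h1, if_pos h2, stepWt_of_notMem h1]
    nlinarith
  · rw [if_neg h1, if_neg h2, stepWt_of_notMem h1, stepWt_of_notMem h2]
    linarith

end golden

/-- The constants used for multiplicity bound `K ≥ 2`. -/
structure CoreParams (K α β γ u ρ r : ℝ) : Prop where
  u_pos : 0 < u
  u_le : u ^ 2 + 2 * u ≤ 1
  mul_u : α * u = 1
  K_eq : K = α - u
  ρ_eq : ρ = 1 - u ^ 2 + u ^ 4
  r_mul : r * (1 + u) = 1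
  β_eq : β = ρ * α
  γ_eq : γ = r * α

namespace CoreParams

variable {K α β γ u ρ r : ℝ} (h : CoreParams K α β γ u ρ r)
include h

theorem u_lt : u < 5 / 12 := by nlinarith [h.u_pos, h.u_le]

theorem α_pos : 0 < α := by
  by_contra hα
  nlinarith [h.u_pos, h.mul_u]

theorem le_α : 2 + u ≤ α := by
  nlinarith [h.u_pos, h.mul_u, h.u_le, h.α_pos]

theorem K_pos : 0 < K := by linarith [h.K_eq, h.le_α]

theorem ρ_le_one : ρ ≤ 1 := by
  have e : u ^ 4 = u ^ 2 * u ^ 2 := by ring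
  rw [h.ρ_eq, e]
  nlinarith [pow_pos h.u_pos 2, show u ^ 2 < 1 by nlinarith [h.u_pos, h.u_lt]]

theorem sq_le : u ^ 2 ≤ 25 / 144 := by nlinarith [h.u_pos, h.u_lt]

theorem le_ρ : 119 / 144 ≤ ρ := by
  rw [h.ρ_eq]
  nlinarith [h.sq_le, pow_pos h.u_pos 4]

theorem r_pos : 0 < r := by
  by_contra hr
  nlinarith [h.r_mul, h.u_pos]

theorem r_lt_one : r < 1 := by nlinarith [h.r_mul, h.u_pos, h.r_pos]

theorem u_mul_le_r : u * (1 + u) ≤ r := by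
  nlinarith [h.r_mul, h.u_pos, h.u_lt, h.r_pos, mul_pos h.u_pos h.u_pos]

theorem one_le_mul_sq : 1 ≤ (1 + u) * ρ ^ 2 := by
  have h0 := h.u_pos
  have hu := h.u_lt
  have e : (1 + u) * ρ ^ 2 - 1 =
      u * (1 - 2 * u - 2 * u ^ 2 + 3 * u ^ 3 + 3 * u ^ 4 - 2 * u ^ 5 - 2 * u ^ 6 + u ^ 7 + u ^ 8) := by
    rw [h.ρ_eq]; ring
  have h7 := pow_pos h0 7
  have h8 := pow_pos h0 8
  have h4 : 2 * u ^ 5 + 2 * u ^ 6 ≤ 3 * u ^ 4 := by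
    have : 0 ≤ u ^ 4 * (3 - 2 * u - 2 * u ^ 2) :=
      mul_nonneg (pow_pos h0 4).le (by nlinarith [h.sq_le])
    nlinarith
  have h3 : 0 ≤ 1 - 2 * u - 2 * u ^ 2 + 3 * u ^ 3 := by
    nlinarith [mul_nonneg h0.le (sq_nonneg (u - 5 / 12)), h.u_le]
  have : 0 ≤ u * (1 - 2 * u - 2 * u ^ 2 + 3 * u ^ 3 + 3 * u ^ 4 - 2 * u ^ 5 - 2 * u ^ 6 + u ^ 7 +
      u ^ 8) := mul_nonneg h0.le (by linarith)
  linarith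

theorem r_le_sq : r ≤ ρ ^ 2 := by
  nlinarith [h.one_le_mul_sq, h.r_mul, h.u_pos]

theorem r_le_ρ : r ≤ ρ := by
  nlinarith [h.r_le_sq, h.ρ_le_one, h.le_ρ]

theorem one_le_mul_ρ : 1 ≤ (1 + u) * ρ := by
  nlinarith [h.one_le_mul_sq, h.ρ_le_one, h.le_ρ, h.u_pos]

theorem u_le_r : u ≤ r := by nlinarith [h.u_mul_le_r, h.u_pos]

theorem β_u : β * u = ρ := by rw [h.β_eq, mul_assoc, h.mul_u, mul_one]

theorem γ_u : γ * u = r := by rw [h.γ_eq, mul_assoc, h.mul_u, mul_one]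

theorem valOrder : ValOrder α β γ where
  one_le_fst := by
    rw [h.β_eq]; nlinarith [h.le_ρ, h.le_α, h.u_pos]
  one_le_snd := by
    rw [h.γ_eq, ← h.mul_u, mul_comm]
    exact mul_le_mul_of_nonneg_right h.u_le_r h.α_pos.le
  fst_le := by rw [h.β_eq]; nlinarith [h.ρ_le_one, h.α_pos]
  snd_le := by rw [h.γ_eq]; nlinarith [h.r_lt_one, h.α_pos]

theorem K_le : K ≤ β := by
  have : u = u ^ 2 * α := by linear_combination (-u) * h.mul_u
  rw [h.β_eq, h.K_eq, h.ρ_eq]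
  nlinarith [mul_pos (pow_pos h.u_pos 4) h.α_pos]

theorem K_mul_r : K * r + 1 = α := by
  have h1 : (K * r + 1 - α) * (1 + u) = 0 := by
    rw [h.K_eq]
    linear_combination (α - u) * h.r_mul - h.mul_u
  have : (1 + u) ≠ 0 := by linarith [h.u_pos]
  linarith [(mul_eq_zero.1 h1).resolve_right this]

theorem one_le_mul_α : 1 ≤ u * (1 + u) * α := by
  nlinarith [h.mul_u, h.u_pos]

theorem one_le_mul_β : 1 ≤ u * (1 + u) * β := by
  have e : u * (1 + u) * β = (1 + u) * ρ := by linear_combination (1 + u) * h.β_u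
  rw [e]
  exact h.one_le_mul_ρ

theorem one_le_mul_γ : 1 ≤ u * (1 + u) * γ := by
  have e : u * (1 + u) * γ = 1 := by linear_combination (1 + u) * h.γ_u + h.r_mul
  exact e.ge

theorem one_le_r_mul {x : ℝ} (hx : 0 ≤ x) (h1 : 1 ≤ u * (1 + u) * x) : 1 ≤ r * x :=
  h1.trans (mul_le_mul_of_nonneg_right h.u_mul_le_r hx)

theorem K_mul_α : K * α + 1 = α ^ 2 := by
  rw [h.K_eq]; linear_combination -h.mul_u

theorem K_sq : K ^ 2 + 1 = α * β := by
  rw [h.K_eq, h.β_eq, h.ρ_eq]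
  linear_combination (-1 + α * u - α * u ^ 3 - u ^ 2) * h.mul_u

theorem pow_mul_le (m : ℕ) :
    ρ ^ (m + 1) * (1 + (m + 1) * u ^ 2 - u ^ 4 + u ^ 6) ≤ 1 := by
  have hδ := h.sq_le
  have hδ0 := pow_pos h.u_pos 2
  have e4 : u ^ 4 = (u ^ 2) ^ 2 := by ring
  have e6 : u ^ 6 = (u ^ 2) ^ 3 := by ring
  have hρ := h.ρ_eq
  have hρ0 := h.le_ρ
  rw [e4] at hρ
  rw [e4, e6]
  set d := u ^ 2
  induction m with
  | zero =>
    have : 0 ≤ d ^ 2 * ((1 - d) ^ 2 - d) := mul_nonneg (sq_nonneg d) (by nlinarith)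
    have h4 : 0 ≤ d ^ 4 * (1 - d) := mul_nonneg (pow_nonneg hδ0.le 4) (by linarith)
    rw [hρ]
    push_cast
    nlinarith
  | succ m ih =>
    refine le_trans ?_ ih
    rw [pow_succ ρ (m + 1), mul_assoc]
    refine mul_le_mul_of_nonneg_left ?_ (pow_nonneg (by linarith) _)
    have hm : (0 : ℝ) ≤ m := Nat.cast_nonneg m
    have h1 : 0 ≤ d * (1 - 3 * d + 2 * d ^ 2 - d ^ 3) := mul_nonneg hδ0.le (by nlinarith)
    have h2 : 0 ≤ (m : ℝ) * d * (1 - d) := by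
      refine mul_nonneg (mul_nonneg hm hδ0.le) (by linarith)
    have h3 : ρ ≤ (1 - d) * (1 + (m + 1) * d - d ^ 2 + d ^ 3) := by
      rw [hρ]; nlinarith
    have h4 := mul_le_mul_of_nonneg_left h3 hδ0.le
    push_cast
    rw [hρ] at h4 ⊢
    nlinarith

theorem final_full (m : ℕ) :
    K * α * ρ ^ (m + 1) + ρ ^ (m + 1) * (ρ + (m + 1)) ≤ α ^ 2 := by
  have h1 := mul_le_mul_of_nonneg_left (h.pow_mul_le m) (sq_nonneg α)
  have e : α ^ 2 * u ^ 2 = 1 := by rw [← mul_pow, h.mul_u, one_pow]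
  have e2 : α ^ 2 * (ρ ^ (m + 1) * (1 + (m + 1) * u ^ 2 - u ^ 4 + u ^ 6)) =
      ρ ^ (m + 1) * (α ^ 2 + (m + 1) - u ^ 2 + u ^ 4) := by
    linear_combination (ρ ^ (m + 1) * ((m + 1) - u ^ 2 + u ^ 4)) * e
  have e3 : K * α * ρ ^ (m + 1) + ρ ^ (m + 1) * (ρ + (m + 1)) =
      ρ ^ (m + 1) * (α ^ 2 + (m + 1) - u ^ 2 + u ^ 4) := by
    rw [← h.K_mul_α]
    linear_combination ρ ^ (m + 1) * h.ρ_eq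
  linarith

theorem final_fst (m : ℕ) :
    K ^ 2 * ρ ^ (m + 1) + ρ ^ (m + 1) * (ρ + (m + 1) * ρ) ≤ α * β := by
  have hρ := h.le_ρ
  have h1 := mul_le_mul_of_nonneg_left (h.final_full m) (show 0 ≤ ρ by linarith)
  have e : ρ * α ^ 2 = α * β := by rw [h.β_eq]; ring
  have h2 : K ^ 2 + ρ ≤ ρ * (K * α + ρ) := by
    have h3 : K * α + 1 = α ^ 2 := h.K_mul_α
    have h4 := h.K_sq
    have : ρ * (K * α + ρ) - (K ^ 2 + ρ) = (1 - ρ) ^ 2 := by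
      linear_combination ρ * h3 + e - h4
    nlinarith [sq_nonneg (1 - ρ)]
  have h5 := mul_le_mul_of_nonneg_left h2 (pow_nonneg (show 0 ≤ ρ by linarith) (m + 1))
  nlinarith

theorem final_both (m : ℕ) :
    ρ ^ (m + 1) * (K * (ρ * (1 + u) + 1) + (1 + (m + 1))) ≤ α ^ 2 := by
  refine le_trans ?_ (h.final_full m)
  have hρ := h.le_ρ
  have h2 : K * (ρ * (1 + u) + 1) + 1 ≤ K * α + ρ := by
    have h0 := h.u_pos
    have hω : u * (ρ * (1 + u) + 1) ≤ 1 - u ^ 4 := by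
      rw [h.ρ_eq]
      have : 0 ≤ u ^ 3 * (1 - u ^ 2 - u ^ 3) := by
        refine mul_nonneg (pow_pos h0 3).le ?_
        nlinarith [h.sq_le, h.u_lt]
      nlinarith [h.u_le]
    have h3 : ρ * (1 + u) + 1 ≤ α * (1 - u ^ 4) := by
      have := mul_le_mul_of_nonneg_left hω h.α_pos.le
      rwa [← mul_assoc, h.mul_u, one_mul] at this
    have h4 := mul_le_mul_of_nonneg_left h3 h.K_pos.le
    have e : K * (α * (1 - u ^ 4)) + 1 = K * α + ρ := by
      rw [h.K_eq, h.ρ_eq]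
      linear_combination (u ^ 4 - u ^ 2 - α * u ^ 3) * h.mul_u
    linarith
  have h5 := mul_le_mul_of_nonneg_left h2 (pow_nonneg (show 0 ≤ ρ by linarith) (m + 1))
  linarith

end CoreParams

section core

variable {K c α β γ u ρ r : ℝ} (hP : CoreParams K α β γ u ρ r)
include hP

theorem rowVal_lost_fst {p : V × V} {S S' : Finset V} (hS : S' ⊆ S) (h1 : p.1 ∈ S)
    (h1' : p.1 ∉ S') : rowVal α β γ p S' ≤ r * rowVal α β γ p S := by
  have e2 := @hS p.2
  have a1 := hP.one_le_r_mul hP.α_pos.le hP.one_le_mul_α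
  have a2 := hP.one_le_r_mul (zero_le_one.trans hP.valOrder.one_le_fst) hP.one_le_mul_β
  have a3 := hP.γ_eq
  unfold rowVal
  split_ifs <;> first | linarith | (exfalso; tauto)

theorem rowVal_lost_snd {p : V × V} {S S' : Finset V} (hS : S' ⊆ S) (h1 : p.1 ∉ S) (h2 : p.2 ∈ S)
    (h2' : p.2 ∉ S') : rowVal α β γ p S' ≤ r * rowVal α β γ p S := by
  have e1 := @hS p.1
  have a2 := hP.one_le_r_mul (zero_le_one.trans hP.valOrder.one_le_snd) hP.one_le_mul_γ
  unfold rowVal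
  split_ifs <;> first | linarith | (exfalso; tauto)

theorem rowVal_lost {p : V × V} {S S' : Finset V} (hS : S' ⊆ S) {y : V} (hy : y ∈ S)
    (hy' : y ∉ S') (h : p.1 = y ∨ p.2 = y) : rowVal α β γ p S' ≤ ρ * rowVal α β γ p S := by
  have h0 := zero_le_one.trans (one_le_rowVal hP.valOrder p S)
  have hr := mul_le_mul_of_nonneg_right hP.r_le_ρ h0
  rcases h with rfl | rfl
  · exact (rowVal_lost_fst hP hS hy hy').trans hr
  · by_cases h1 : p.1 ∈ S
    · by_cases h1' : p.1 ∈ S'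
      · rw [rowVal, rowVal, if_pos h1, if_pos h1', if_pos hy, if_neg hy', hP.β_eq]
      · exact (rowVal_lost_fst hP hS h1 h1').trans hr
    · exact (rowVal_lost_snd hP hS h1 hy hy').trans hr

theorem vertVal_lost (R : V → V × V) {S S' : Finset V} (hS : S' ⊆ S) {v y : V} (hy : y ∈ S)
    (hy' : y ∉ S') (hv : v ≠ y) (h : (R v).1 = y ∨ (R v).2 = y) :
    vertVal α β γ R S' v ≤ ρ * vertVal α β γ R S v :=
  rowVal_lost hP (erase_subset_erase v hS) (mem_erase.2 ⟨hv.symm, hy⟩)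
    (fun h => hy' (mem_of_mem_erase h)) h

variable {t : V} {X : Finset V} {R : V → V × V}

/-- The cases in which the first target has small weight for reasons not involving the second. -/
theorem pathWt_erase_le_r_of_fst (hc : 1 ≤ c) (hR : ∀ v, (R v).1 ≠ (R v).2) (ht : t ∉ X)
    (hB : ∀ Y ⊂ X, Bounded K c α β γ t Y) {a : V} (ha : a ∈ X)
    (hbad : ¬ ((R a).1 ∈ (insert t X).erase a ∧ ∀ x ∈ X.erase a, (R x).1 ≠ a ∧
      ((R x).2 = a → (R x).1 ∈ (insert t X).erase x))) :
    pathWt (extremeWt K R) t (X.erase a) a ≤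
      r * (c * ∏ v ∈ X, vertVal α β γ R (insert t X) v) := by
  have h := hP.valOrder
  by_cases h1 : (R a).1 ∈ (insert t X).erase a
  · have : ∃ x ∈ X.erase a, (R x).1 = a ∨ ((R x).2 = a ∧ (R x).1 ∉ (insert t X).erase x) := by
      by_contra hcon
      push Not at hcon
      exact hbad ⟨h1, fun x hx => hcon x hx⟩
    obtain ⟨x, hx, hxa⟩ := this
    refine (pathWt_erase_le hR ht ha (hB _ (erase_ssubset ha))).trans ?_
    rw [mul_left_comm]
    refine mul_le_mul_of_nonneg_left ?_ (by linarith)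
    refine prod_vertVal_le_mul h R (erase_subset _ _) (mem_of_mem_erase hx) ?_
    have hmem : a ∈ (insert t X).erase x :=
      mem_erase.2 ⟨(ne_of_mem_erase hx).symm, mem_insert_of_mem ha⟩
    have hnot : a ∉ ((insert t X).erase a).erase x := by simp
    have hsub := erase_subset_erase x (erase_subset a (insert t X))
    rcases hxa with e | ⟨e, h2⟩
    · exact rowVal_lost_fst hP hsub (e ▸ hmem) (e ▸ hnot)
    · exact rowVal_lost_snd hP hsub h2 (e ▸ hmem) (e ▸ hnot)
  · have hs := pathWt_erase_le_single hP.K_pos.le h hc hR ht hB ha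
    have hp' := prod_vertVal_nonneg h R ((insert t X).erase a) (X.erase a)
    have hm := mul_le_mul_of_nonneg_left (prod_vertVal_mono h R (erase_subset a (insert t X))
      (X.erase a)) (show 0 ≤ c by linarith)
    have hp := mul_nonneg (show 0 ≤ c by linarith)
      (prod_vertVal_nonneg h R (insert t X) (X.erase a))
    rw [if_neg h1, mul_zero, zero_add] at hs
    rw [← mul_prod_erase X _ ha, mul_left_comm c, ← mul_assoc]
    by_cases h2 : (R a).2 ∈ (insert t X).erase a
    · rw [if_pos h2, one_mul] at hs
      rw [vertVal, rowVal, if_neg h1, if_pos h2]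
      have := hP.one_le_r_mul (zero_le_one.trans h.one_le_snd) hP.one_le_mul_γ
      nlinarith
    · rw [if_neg h2, zero_mul] at hs
      exact hs.trans (mul_nonneg (mul_nonneg hP.r_pos.le (vertVal_nonneg h _ _ _)) hp)

theorem one_le_mul_vertVal {S : Finset V} {b : V}
    (hb : (R b).1 ∈ S.erase b ∨ (R b).2 ∈ S.erase b) :
    1 ≤ u * (1 + u) * vertVal α β γ R S b := by
  have := hP.one_le_mul_α; have := hP.one_le_mul_β; have := hP.one_le_mul_γ
  unfold vertVal rowVal
  split_ifs <;> first | assumption | (exfalso; tauto)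

theorem pathWt_erase_le_r_of_snd (hc : 1 ≤ c) (hR : ∀ v, (R v).1 ≠ (R v).2) (ht : t ∉ X)
    (hB : ∀ Y ⊂ X, Bounded K c α β γ t Y) {a b : V} (ha : a ∈ X) (hb : b ∈ X) (hab : a ≠ b)
    (hlive : (R b).1 ∈ (insert t X).erase b ∨ (R b).2 ∈ (insert t X).erase b)
    (hin : ∀ x ∈ X.erase b, (R x).1 ≠ b ∧ (R x).2 ≠ b) :
    pathWt (extremeWt K R) t (X.erase a) a ≤
      r * (c * ∏ v ∈ X, vertVal α β γ R (insert t X) v) := by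
  have h := hP.valOrder
  have h1 := pathWt_erase_le_of_forall hP.K_pos.le hR ht ha hb hab
    (hB _ ((erase_subset _ _).trans_ssubset (erase_ssubset ha))) hin
  have h2 := mul_le_mul_of_nonneg_left (prod_vertVal_mono h R
    ((erase_subset b _).trans (erase_subset a (insert t X))) (X.erase b)) (show 0 ≤ c by linarith)
  have h3 := hP.one_le_r_mul (vertVal_nonneg h _ _ _) (one_le_mul_vertVal hP hlive)
  have hp := mul_nonneg (show 0 ≤ c by linarith)
    (prod_vertVal_nonneg h R (insert t X) (X.erase b))
  rw [← mul_prod_erase X _ hb, mul_left_comm c, ← mul_assoc]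
  nlinarith

/-- Bound in terms of the in-neighbours of `a`. -/
theorem pathWt_erase_le_pow (hc : 1 ≤ c) (hR : ∀ v, (R v).1 ≠ (R v).2) (ht : t ∉ X)
    (hB : ∀ Y ⊂ X, Bounded K c α β γ t Y) {a : V} (ha : a ∈ X)
    (h1 : (R a).1 ∈ (insert t X).erase a) :
    pathWt (extremeWt K R) t (X.erase a) a ≤
      (if (R a).2 ∈ (insert t X).erase a then α else K) *
      ρ ^ #{x ∈ X.erase a | (R x).2 = a} *
      (c * ∏ v ∈ X.erase a, vertVal α β γ R (insert t X) v) := by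
  have h := hP.valOrder
  have hlost : ∀ x ∈ ({x ∈ X.erase a | (R x).2 = a} : Finset V),
      vertVal α β γ R ((insert t X).erase a) x ≤ ρ * vertVal α β γ R (insert t X) x := by
    intro x hx
    rw [mem_filter] at hx
    exact vertVal_lost hP R (erase_subset _ _) (mem_insert_of_mem ha) (notMem_erase _ _)
      (ne_of_mem_erase hx.1) (Or.inr hx.2)
  have hc0 : 0 ≤ c := by linarith
  split_ifs with h2
  · refine (pathWt_erase_le hR ht ha (hB _ (erase_ssubset ha))).trans ?_
    have := prod_vertVal_le_pow h R (erase_subset a (insert t X))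
      ((filter_subset _ _).trans (erase_subset a X)) hlost
    refine (mul_le_mul_of_nonneg_left this hc0).trans_eq ?_
    rw [← mul_prod_erase X _ ha, vertVal, rowVal, if_pos h1, if_pos h2]
    ring
  · have hs := pathWt_erase_le_single hP.K_pos.le h hc hR ht hB ha
    rw [if_pos h1, if_neg h2, add_zero, mul_one] at hs
    have := prod_vertVal_le_pow h R (erase_subset a (insert t X)) (filter_subset _ _) hlost
    refine hs.trans ((mul_le_mul_of_nonneg_left (mul_le_mul_of_nonneg_left this hc0)
      hP.K_pos.le).trans_eq ?_)
    ring

/-- Merging `a` into its in-neighbours, all of which have `a` as their second target. -/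
theorem pathWt_erase_le_sum (hc : 1 ≤ c) (hR : ∀ v, (R v).1 ≠ (R v).2) (ht : t ∉ X)
    (hB : ∀ Y ⊂ X, Bounded K c α β γ t Y) {a b : V} (ha : a ∈ X) (hb : b ∈ X) (hab : a ≠ b)
    (hin : ∀ x ∈ X.erase a, (R x).1 ≠ a) {v₀ : ℝ}
    (hv : ∀ x ∈ X.erase a, (R x).2 = a →
      rowVal α β γ (R a) ((((insert t X).erase b).erase a).erase x) ≤ v₀) :
    pathWt (extremeWt K R) t (X.erase b) b ≤
      c * (∏ v ∈ X.erase a, vertVal α β γ R (((insert t X).erase b).erase a) v +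
      v₀ * ∑ x ∈ X.erase a with (R x).2 = a,
        ∏ v ∈ (X.erase a).erase x, vertVal α β γ R (((insert t X).erase b).erase a) v) := by
  have h := hP.valOrder
  refine (pathWt_erase_le_center hP.K_pos.le hR ht hb ha hab.symm
    (hB _ ((erase_subset _ _).trans_ssubset (erase_ssubset hb)))).trans ?_
  rw [mul_add]
  refine add_le_add le_rfl ?_
  rw [sum_filter, mul_sum, mul_sum]
  refine sum_le_sum fun x hx => ?_
  rw [extremeWt, if_neg (hin x hx).symm, zero_add]
  by_cases hxa : (R x).2 = a
  · rw [if_pos hxa.symm, if_pos hxa, one_mul]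
    refine mul_le_mul_of_nonneg_left (mul_le_mul_of_nonneg_right (hv x hx hxa) ?_) (by linarith)
    exact prod_vertVal_nonneg h _ _ _
  · rw [if_neg (Ne.symm hxa), if_neg hxa]
    simp

end core

/-- If all vertices of `L` lose a factor `q` and a further vertex `z` loses a factor `q'` then the
product of the values loses `q' * q ^ #L`. -/
theorem prod_vertVal_le_mul_pow {α β γ : ℝ} (h : ValOrder α β γ) (R : V → V × V) {S S' : Finset V}
    (hS : S' ⊆ S) {L Y : Finset V} (hL : L ⊆ Y) {z : V} (hz : z ∈ Y) (hzL : z ∉ L) {q q' : ℝ}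
    (hq : ∀ v ∈ L, vertVal α β γ R S' v ≤ q * vertVal α β γ R S v)
    (hq' : vertVal α β γ R S' z ≤ q' * vertVal α β γ R S z) (hq0 : 0 ≤ q') :
    ∏ v ∈ Y, vertVal α β γ R S' v ≤ q' * q ^ #L * ∏ v ∈ Y, vertVal α β γ R S v := by
  have hLz : L ⊆ Y.erase z := fun v hv =>
    mem_erase.2 ⟨by rintro rfl; exact hzL hv, hL hv⟩
  rw [← mul_prod_erase Y _ hz, ← mul_prod_erase Y (fun v => vertVal α β γ R S v) hz]
  refine (mul_le_mul hq' (prod_vertVal_le_pow h R hS hLz hq) (prod_vertVal_nonneg h _ _ _)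
    (mul_nonneg hq0 (vertVal_nonneg h _ _ _))).trans_eq ?_
  ring

section core

variable {K c α β γ u ρ r : ℝ} (hP : CoreParams K α β γ u ρ r)
include hP

variable {t : V} {X : Finset V} {R : V → V × V} {a b : V}

theorem prod_erase_eq_mul (hM : ∀ x ∈ X.erase a, (R x).1 ≠ a ∧
      ((R x).2 = a → (R x).1 ∈ (insert t X).erase x)) (ha : a ∈ X) {x : V} (hx : x ∈ X.erase a)
    (hxa : (R x).2 = a) :
    ∏ v ∈ (X.erase a).erase x, vertVal α β γ R (insert t X) v =
      u * ∏ v ∈ X.erase a, vertVal α β γ R (insert t X) v := by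
  have h2 : (R x).2 ∈ (insert t X).erase x := by
    rw [hxa]; exact mem_erase.2 ⟨(ne_of_mem_erase hx).symm, mem_insert_of_mem ha⟩
  rw [← mul_prod_erase (X.erase a) (fun v => vertVal α β γ R (insert t X) v) hx, ← mul_assoc,
    vertVal, rowVal, if_pos ((hM x hx).2 hxa), if_pos h2, mul_comm u, hP.mul_u, one_mul]

theorem vertVal_lost_snd (ha : a ∈ X) {x : V} (hx : x ∈ X.erase a) (hxa : (R x).2 = a) :
    vertVal α β γ R (((insert t X).erase b).erase a) x ≤
      ρ * vertVal α β γ R (insert t X) x :=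
  vertVal_lost hP R ((erase_subset _ _).trans (erase_subset _ _)) (mem_insert_of_mem ha)
    (notMem_erase _ _) (ne_of_mem_erase hx) (Or.inr hxa)

theorem prod_erase_le_pow (ha : a ∈ X) {m : ℕ} (hm : #{x ∈ X.erase a | (R x).2 = a} = m) :
    ∏ v ∈ X.erase a, vertVal α β γ R (((insert t X).erase b).erase a) v ≤
      ρ ^ m * ∏ v ∈ X.erase a, vertVal α β γ R (insert t X) v := by
  rw [← hm]
  refine prod_vertVal_le_pow hP.valOrder R ((erase_subset _ _).trans (erase_subset _ _))
    (filter_subset _ _) fun v hv => ?_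
  rw [mem_filter] at hv
  exact vertVal_lost_snd hP ha hv.1 hv.2

theorem prod_erase_erase_le_pow (hM : ∀ x ∈ X.erase a, (R x).1 ≠ a ∧
      ((R x).2 = a → (R x).1 ∈ (insert t X).erase x)) (ha : a ∈ X) {m : ℕ}
    (hm : #{x ∈ X.erase a | (R x).2 = a} = m + 1) {x : V} (hx : x ∈ X.erase a)
    (hxa : (R x).2 = a) :
    ∏ v ∈ (X.erase a).erase x, vertVal α β γ R (((insert t X).erase b).erase a) v ≤
      ρ ^ m * (u * ∏ v ∈ X.erase a, vertVal α β γ R (insert t X) v) := by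
  rw [← prod_erase_eq_mul hP hM ha hx hxa]
  have hc : #(({x ∈ X.erase a | (R x).2 = a} : Finset V).erase x) = m := by
    rw [card_erase_of_mem (mem_filter.2 ⟨hx, hxa⟩), hm, Nat.add_sub_cancel]
  rw [← hc]
  refine prod_vertVal_le_pow hP.valOrder R ((erase_subset _ _).trans (erase_subset _ _))
    (erase_subset_erase _ (filter_subset _ _)) fun v hv => ?_
  have hv := mem_filter.1 (mem_of_mem_erase hv)
  exact vertVal_lost_snd hP ha hv.1 hv.2

theorem CoreParams.ρ_pos : 0 < ρ := by linarith [hP.le_ρ]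

section bounds

variable (hc : 1 ≤ c) (hR : ∀ v, (R v).1 ≠ (R v).2) (ht : t ∉ X)
    (hB : ∀ Y ⊂ X, Bounded K c α β γ t Y) (ha : a ∈ X) (hb : b ∈ X) (hab : a ≠ b)
    (hM : ∀ x ∈ X.erase a, (R x).1 ≠ a ∧ ((R x).2 = a → (R x).1 ∈ (insert t X).erase x))
    {m : ℕ} (hm : #{x ∈ X.erase a | (R x).2 = a} = m + 1)
include hc hR ht hB ha hb hab hM hm

theorem pathWt_erase_le_of_le {v₀ P₀ P₁ : ℝ} (hv₀ : 0 ≤ v₀)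
    (hv : ∀ x ∈ X.erase a, (R x).2 = a →
      rowVal α β γ (R a) ((((insert t X).erase b).erase a).erase x) ≤ v₀)
    (h0 : ∏ v ∈ X.erase a, vertVal α β γ R (((insert t X).erase b).erase a) v ≤ P₀)
    (h1 : ∀ x ∈ X.erase a, (R x).2 = a →
      ∏ v ∈ (X.erase a).erase x, vertVal α β γ R (((insert t X).erase b).erase a) v ≤ P₁) :
    pathWt (extremeWt K R) t (X.erase b) b ≤ c * (P₀ + v₀ * ((m + 1) * P₁)) := by
  refine (pathWt_erase_le_sum hP hc hR ht hB ha hb hab (fun x hx => (hM x hx).1) hv).trans ?_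
  refine mul_le_mul_of_nonneg_left (add_le_add h0 (mul_le_mul_of_nonneg_left ?_ hv₀)) (by linarith)
  have := sum_le_card_nsmul ({x ∈ X.erase a | (R x).2 = a} : Finset V)
    (fun x => ∏ v ∈ (X.erase a).erase x, vertVal α β γ R (((insert t X).erase b).erase a) v) P₁
    fun x hx => h1 x (mem_filter.1 hx).1 (mem_filter.1 hx).2
  rw [hm, nsmul_eq_mul] at this
  exact_mod_cast this

omit hc hR ht hB hb hab hM hm ha in
theorem rowVal_le_vertVal (x : V) :
    rowVal α β γ (R a) ((((insert t X).erase b).erase a).erase x) ≤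
      vertVal α β γ R (insert t X) a :=
  rowVal_mono hP.valOrder _
    ((erase_subset _ _).trans (erase_subset_erase _ (erase_subset _ _)))

theorem pathWt_erase_le_of_other {z : V} (hz : z ∈ X.erase a) (hzb : z ≠ b) (hza : (R z).2 ≠ a)
    (hzR : (R z).1 = b ∨ (R z).2 = b) :
    pathWt (extremeWt K R) t (X.erase b) b ≤
      c * (ρ ^ (m + 1) * (ρ + (m + 1) * (u * vertVal α β γ R (insert t X) a)) *
        ∏ v ∈ X.erase a, vertVal α β γ R (insert t X) v) := by
  have h := hP.valOrder
  have hS : ((insert t X).erase b).erase a ⊆ insert t X :=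
    (erase_subset _ _).trans (erase_subset _ _)
  have hzl : vertVal α β γ R (((insert t X).erase b).erase a) z ≤
      ρ * vertVal α β γ R (insert t X) z :=
    vertVal_lost hP R hS (mem_insert_of_mem hb) (by simp) hzb hzR
  refine (pathWt_erase_le_of_le hP hc hR ht hB ha hb hab hM hm
    (P₀ := ρ * ρ ^ (m + 1) * ∏ v ∈ X.erase a, vertVal α β γ R (insert t X) v)
    (P₁ := ρ * ρ ^ m * (u * ∏ v ∈ X.erase a, vertVal α β γ R (insert t X) v))
    (vertVal_nonneg h R (insert t X) a)
    (fun x _ _ => rowVal_le_vertVal hP x) ?_ fun x hx hxa => ?_).trans_eq ?_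
  · rw [← hm]
    refine prod_vertVal_le_mul_pow h R hS (filter_subset _ _) hz (by simp [hza])
      (fun v hv => ?_) hzl hP.ρ_pos.le
    rw [mem_filter] at hv
    exact vertVal_lost_snd hP ha hv.1 hv.2
  · rw [← prod_erase_eq_mul hP hM ha hx hxa]
    have hc : #(({x ∈ X.erase a | (R x).2 = a} : Finset V).erase x) = m := by
      rw [card_erase_of_mem (mem_filter.2 ⟨hx, hxa⟩), hm, Nat.add_sub_cancel]
    rw [← hc]
    refine prod_vertVal_le_mul_pow h R hS (erase_subset_erase _ (filter_subset _ _))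
      (mem_erase.2 ⟨by rintro rfl; exact hza hxa, hz⟩) (by simp [hza])
      (fun v hv => ?_) hzl hP.ρ_pos.le
    have hv := mem_filter.1 (mem_of_mem_erase hv)
    exact vertVal_lost_snd hP ha hv.1 hv.2
  · ring

omit hc hR ht hB hb hab hM hm ha in
theorem CoreParams.u_mul_vertVal_le (S : Finset V) (v : V) : u * vertVal α β γ R S v ≤ 1 := by
  rw [← hP.mul_u, mul_comm]
  exact mul_le_mul_of_nonneg_right (vertVal_le hP.valOrder _ _ _) hP.u_pos.le

theorem pathWt_erase_le_of_dead {z : V} (hz : z ∈ X.erase a) (hza : (R z).2 = a)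
    (hzR : (R z).1 = b) :
    pathWt (extremeWt K R) t (X.erase b) b ≤
      c * (ρ ^ (m + 1) * (ρ + (m + 1) * (u * vertVal α β γ R (insert t X) a)) *
        ∏ v ∈ X.erase a, vertVal α β γ R (insert t X) v) := by
  have h := hP.valOrder
  have hρ := hP.ρ_pos
  have hu := hP.u_pos
  have hS : ((insert t X).erase b).erase a ⊆ insert t X :=
    (erase_subset _ _).trans (erase_subset _ _)
  have hzM : z ∈ ({x ∈ X.erase a | (R x).2 = a} : Finset V) := mem_filter.2 ⟨hz, hza⟩
  have hzl : vertVal α β γ R (((insert t X).erase b).erase a) z ≤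
      u * vertVal α β γ R (insert t X) z := by
    have h1 : (R z).1 ∈ (insert t X).erase z := (hM z hz).2 hza
    have h2 : (R z).2 ∈ (insert t X).erase z :=
      mem_erase.2 ⟨by rw [hza]; exact (ne_of_mem_erase hz).symm,
        by rw [hza]; exact mem_insert_of_mem ha⟩
    rw [vertVal, vertVal, rowVal, rowVal, if_pos h1, if_pos h2, mul_comm u, hP.mul_u]
    simp [hzR, hza]
  have hlost : ∀ L ⊆ ({x ∈ X.erase a | (R x).2 = a} : Finset V), ∀ v ∈ L,
      vertVal α β γ R (((insert t X).erase b).erase a) v ≤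
        ρ * vertVal α β γ R (insert t X) v := fun L hL v hv =>
    vertVal_lost_snd hP ha (mem_filter.1 (hL hv)).1 (mem_filter.1 (hL hv)).2
  have hcz : #(({x ∈ X.erase a | (R x).2 = a} : Finset V).erase z) = m := by
    rw [card_erase_of_mem hzM, hm, Nat.add_sub_cancel]
  set F := ∏ v ∈ X.erase a, vertVal α β γ R (insert t X) v with hF
  have hF0 : 0 ≤ F := prod_vertVal_nonneg h _ _ _
  have hp : ∏ v ∈ X.erase a, vertVal α β γ R (((insert t X).erase b).erase a) v ≤
      u * ρ ^ m * F := by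
    rw [← hcz]
    exact prod_vertVal_le_mul_pow h R hS ((erase_subset _ _).trans (filter_subset _ _)) hz
      (notMem_erase _ _) (hlost _ (erase_subset _ _)) hzl hu.le
  have hpz : ∏ v ∈ (X.erase a).erase z, vertVal α β γ R (((insert t X).erase b).erase a) v ≤
      ρ ^ m * (u * F) := prod_erase_erase_le_pow hP hM ha hm hz hza
  have hpx : ∀ x ∈ ({x ∈ X.erase a | (R x).2 = a} : Finset V).erase z,
      ∏ v ∈ (X.erase a).erase x, vertVal α β γ R (((insert t X).erase b).erase a) v ≤
        ρ ^ (m + 1) * (u * F) := by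
    intro x hx
    obtain ⟨hx1, hx2⟩ := mem_filter.1 (mem_of_mem_erase hx)
    have hzx := (ne_of_mem_erase hx).symm
    obtain ⟨k, rfl⟩ : ∃ k, m = k + 1 := by
      refine Nat.exists_eq_succ_of_ne_zero ?_
      rw [← hcz]
      exact (card_pos.2 ⟨x, hx⟩).ne'
    have hcx : #((({x ∈ X.erase a | (R x).2 = a} : Finset V).erase z).erase x) = k := by
      rw [card_erase_of_mem hx, hcz, Nat.add_sub_cancel]
    rw [hF, ← prod_erase_eq_mul hP hM ha hx1 hx2]
    have := prod_vertVal_le_mul_pow h R hS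
      (erase_subset_erase x ((erase_subset z _).trans (filter_subset _ _)))
      (mem_erase.2 ⟨hzx, hz⟩)
      (fun h => notMem_erase z _ (mem_of_mem_erase h))
      (hlost _ ((erase_subset _ _).trans (erase_subset _ _))) hzl hu.le
    rw [hcx] at this
    refine this.trans (mul_le_mul_of_nonneg_right ?_ (prod_vertVal_nonneg h _ _ _))
    rw [pow_succ, pow_succ, mul_assoc, mul_comm u]
    refine mul_le_mul_of_nonneg_left ?_ (pow_pos hρ k).le
    nlinarith [hP.r_le_sq, hP.u_le_r]
  refine (pathWt_erase_le_sum hP hc hR ht hB ha hb hab (fun x hx => (hM x hx).1)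
    (v₀ := vertVal α β γ R (insert t X) a) fun x _ _ => rowVal_le_vertVal hP x).trans ?_
  refine mul_le_mul_of_nonneg_left ?_ (by linarith)
  have hsum : ∑ x ∈ X.erase a with (R x).2 = a,
      ∏ v ∈ (X.erase a).erase x, vertVal α β γ R (((insert t X).erase b).erase a) v ≤
        ρ ^ m * (u * F) + m * (ρ ^ (m + 1) * (u * F)) := by
    rw [← add_sum_erase _ _ hzM]
    refine add_le_add hpz ?_
    have := sum_le_card_nsmul _ _ _ hpx
    rwa [hcz, nsmul_eq_mul] at this
  have hA0 := vertVal_nonneg h R (insert t X) a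
  have hA1 := hP.u_mul_vertVal_le (R := R) (insert t X) a
  set A := vertVal α β γ R (insert t X) a
  have key : u + u * A ≤ ρ ^ 2 + ρ * (u * A) := by
    nlinarith [hP.le_ρ, hP.ρ_le_one, hP.u_lt]
  have h1 := mul_le_mul_of_nonneg_left hsum hA0
  have h2 := mul_le_mul_of_nonneg_left key (mul_nonneg (pow_pos hρ m).le hF0)
  calc _ ≤ u * ρ ^ m * F + A * (ρ ^ m * (u * F) + m * (ρ ^ (m + 1) * (u * F))) := add_le_add hp h1
    _ = ρ ^ m * F * (u + u * A) + m * ρ ^ (m + 1) * u * A * F := by ring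
    _ ≤ ρ ^ m * F * (ρ ^ 2 + ρ * (u * A)) + m * ρ ^ (m + 1) * u * A * F := by linarith
    _ = _ := by ring

theorem pathWt_erase_le_of_fst_eq (hab1 : (R a).1 = b) :
    pathWt (extremeWt K R) t (X.erase b) b ≤
      c * (ρ ^ (m + 1) * (ρ + (m + 1) * (u * vertVal α β γ R (insert t X) a)) *
        ∏ v ∈ X.erase a, vertVal α β γ R (insert t X) v) := by
  have h := hP.valOrder
  have hρ := hP.ρ_pos
  have hu := hP.u_pos
  have hF0 : 0 ≤ ∏ v ∈ X.erase a, vertVal α β γ R (insert t X) v := prod_vertVal_nonneg h _ _ _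
  have h1 : (R a).1 ∈ (insert t X).erase a := by
    rw [hab1]; exact mem_erase.2 ⟨hab.symm, mem_insert_of_mem hb⟩
  have hm0 : (0 : ℝ) ≤ m := Nat.cast_nonneg m
  have hk := pow_pos hρ m
  have bound : ∀ v₀ : ℝ, 0 ≤ v₀ → (∀ x ∈ X.erase a, (R x).2 = a →
      rowVal α β γ (R a) ((((insert t X).erase b).erase a).erase x) ≤ v₀) → ∀ w : ℝ,
      ρ + v₀ * ((m + 1) * u) ≤ ρ * (ρ + (m + 1) * w) →
      pathWt (extremeWt K R) t (X.erase b) b ≤ c * (ρ ^ (m + 1) * (ρ + (m + 1) * w) *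
        ∏ v ∈ X.erase a, vertVal α β γ R (insert t X) v) := by
    intro v₀ hv₀ hv w hw
    refine (pathWt_erase_le_of_le hP hc hR ht hB ha hb hab hM hm hv₀ hv
      (prod_erase_le_pow hP ha hm)
      fun x hx hxa => prod_erase_erase_le_pow hP hM ha hm hx hxa).trans ?_
    refine mul_le_mul_of_nonneg_left ?_ (by linarith)
    refine le_trans (le_of_eq ?_) ((mul_le_mul_of_nonneg_left hw (mul_nonneg hk.le hF0)).trans_eq ?_)
    all_goals ring
  rw [vertVal, rowVal, if_pos h1]
  split_ifs with h2
  · refine bound γ (zero_le_one.trans h.one_le_snd) (fun x _ _ => ?_) _ ?_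
    · have := h.one_le_snd
      rw [rowVal, if_neg (by simp [hab1])]
      split_ifs <;> linarith
    · have e : γ * ((m + 1) * u) = (m + 1) * r := by rw [← hP.γ_u]; ring
      rw [e, mul_comm u, hP.mul_u]
      nlinarith [hP.r_le_sq, mul_le_mul_of_nonneg_left hP.r_le_ρ hm0]
  · refine bound 1 zero_le_one (fun x _ _ => ?_) _ ?_
    · rw [rowVal, if_neg (by simp [hab1]), if_neg]
      intro h3
      exact h2 (erase_subset_erase _ (erase_subset _ _) (mem_of_mem_erase h3))
    · rw [mul_comm u β, hP.β_u]
      have h3 : u ≤ ρ ^ 2 := hP.u_le_r.trans hP.r_le_sq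
      have h4 : ρ + u ≤ 2 * ρ ^ 2 := by nlinarith [hP.le_ρ, hP.u_lt]
      nlinarith [mul_le_mul_of_nonneg_left h3 hm0]

/-- The case in which `a` is the only in-neighbour of `b`, and `b` is the second target of `a`. -/
theorem pathWt_erase_le_of_snd_eq (hab2 : (R a).2 = b)
    (hlive : (R b).1 ∈ (insert t X).erase b ∨ (R b).2 ∈ (insert t X).erase b)
    (hin : ∀ x ∈ X.erase b, x ≠ a → (R x).1 ≠ b ∧ (R x).2 ≠ b) :
    pathWt (extremeWt K R) t (X.erase b) b ≤ c * (ρ ^ (m + 1) * (1 + (m + 1)) *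
        ∏ v ∈ X.erase a, vertVal α β γ R (insert t X) v) ∧
    pathWt (extremeWt K R) t (X.erase a) a ≤ c * (ρ ^ (m + 1) * (ρ * (1 + u) + 1) *
        ∏ v ∈ X.erase a, vertVal α β γ R (insert t X) v) := by
  have h := hP.valOrder
  have hρ := hP.ρ_pos
  have hu := hP.u_pos
  have hβ1 := h.one_le_fst
  have hS : ((insert t X).erase b).erase a ⊆ insert t X :=
    (erase_subset _ _).trans (erase_subset _ _)
  have hF0 : 0 ≤ ∏ v ∈ X.erase a, vertVal α β γ R (insert t X) v := prod_vertVal_nonneg h _ _ _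
  have hrow : ∀ S' ⊆ ((insert t X).erase b).erase a, rowVal α β γ (R a) S' ≤ β := by
    intro S' hS'
    rw [rowVal]
    have : (R a).2 ∉ S' := fun h3 => by
      have := hS' h3
      simp [hab2] at this
    rw [if_neg this, if_neg this]
    split_ifs <;> linarith
  have hp := prod_erase_le_pow hP ha hm (t := t) (b := b)
  constructor
  · refine (pathWt_erase_le_of_le hP hc hR ht hB ha hb hab hM hm (zero_le_one.trans hβ1)
      (fun x _ _ => hrow _ (erase_subset _ _)) hp
      fun x hx hxa => prod_erase_erase_le_pow hP hM ha hm hx hxa).trans_eq ?_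
    rw [← hP.β_u]
    ring
  · set D := ∏ v ∈ (X.erase a).erase b, vertVal α β γ R (((insert t X).erase b).erase a) v with hD
    set F := ∏ v ∈ X.erase a, vertVal α β γ R (insert t X) v with hF
    have hba : b ∈ X.erase a := mem_erase.2 ⟨hab.symm, hb⟩
    have hDle : D ≤ ρ ^ (m + 1) * (u * (1 + u)) * F := by
      by_cases hbM : (R b).2 = a
      · refine (prod_erase_erase_le_pow hP hM ha hm hba hbM).trans ?_
        have := mul_le_mul_of_nonneg_left hP.one_le_mul_ρ
          (mul_nonneg (pow_pos hρ m).le (mul_nonneg hu.le hF0))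
        refine le_trans (le_of_eq (mul_one _).symm) (this.trans_eq ?_)
        ring
      · have h1 : D ≤ ρ ^ (m + 1) *
            ∏ v ∈ (X.erase a).erase b, vertVal α β γ R (insert t X) v := by
          rw [← hm]
          refine prod_vertVal_le_pow h R hS (fun v hv => ?_) fun v hv => ?_
          · rw [mem_filter] at hv
            exact mem_erase.2 ⟨by rintro rfl; exact hbM hv.2, hv.1⟩
          · rw [mem_filter] at hv
            exact vertVal_lost_snd hP ha hv.1 hv.2
        refine h1.trans ?_
        rw [mul_assoc]
        refine mul_le_mul_of_nonneg_left ?_ (pow_pos hρ _).le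
        rw [hF, ← mul_prod_erase (X.erase a) _ hba, ← mul_assoc]
        exact le_mul_of_one_le_left (prod_vertVal_nonneg h _ _ _) (one_le_mul_vertVal hP hlive)
    have hD0 : 0 ≤ D := prod_vertVal_nonneg h _ _ _
    have h1 := pathWt_erase_le_center hP.K_pos.le hR ht ha hb hab
      (hB _ ((erase_subset _ _).trans_ssubset (erase_ssubset ha)))
    have hab' : a ∈ X.erase b := mem_erase.2 ⟨hab, ha⟩
    rw [sum_eq_single_of_mem a hab' (fun x hx hxa => by
      rw [extremeWt, if_neg (hin x hx hxa).1.symm, if_neg (hin x hx hxa).2.symm]; ring),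
      ← mul_prod_erase (X.erase b) _ hab', erase_right_comm (a := b) (s := X),
      erase_right_comm (a := a) (b := b), extremeWt, if_pos hab2.symm,
      if_neg (fun e => hR a (e.symm.trans hab2.symm)), zero_add, one_mul, ← hD] at h1
    have e1 : rowVal α β γ (R b) ((((insert t X).erase b).erase a).erase a) * D =
        ∏ v ∈ X.erase a, vertVal α β γ R (((insert t X).erase b).erase a) v := by
      rw [← mul_prod_erase (X.erase a) _ hba, ← hD, vertVal, erase_idem,
        erase_eq_of_notMem (a := b) (s := ((insert t X).erase b).erase a) (by simp)]
    rw [e1] at h1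
    refine h1.trans ?_
    rw [← mul_add]
    refine mul_le_mul_of_nonneg_left ?_ (by linarith)
    have h2 : vertVal α β γ R (((insert t X).erase b).erase a) a * D ≤
        β * (ρ ^ (m + 1) * (u * (1 + u)) * F) :=
      mul_le_mul (hrow _ (erase_subset _ _)) hDle hD0 (zero_le_one.trans hβ1)
    refine (add_le_add h2 hp).trans_eq ?_
    rw [← hP.β_u]
    ring

end bounds

end core

section core

variable {K c α β γ u ρ r : ℝ} (hP : CoreParams K α β γ u ρ r)
include hP

variable {t : V} {X : Finset V} {R : V → V × V} {a b : V}

/-- The main inequality when both targets lie in `X` and the first one has only full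
in-neighbours. -/
theorem mul_pathWt_add_le (hc : 1 ≤ c) (hR : ∀ v, (R v).1 ≠ (R v).2) (ht : t ∉ X)
    (hB : ∀ Y ⊂ X, Bounded K c α β γ t Y) (ha : a ∈ X) (hb : b ∈ X) (hab : a ≠ b)
    (h1 : (R a).1 ∈ (insert t X).erase a)
    (hM : ∀ x ∈ X.erase a, (R x).1 ≠ a ∧ ((R x).2 = a → (R x).1 ∈ (insert t X).erase x))
    (hlive : (R b).1 ∈ (insert t X).erase b ∨ (R b).2 ∈ (insert t X).erase b) {z : V}
    (hz : z ∈ X.erase b) (hzR : (R z).1 = b ∨ (R z).2 = b) {m : ℕ}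
    (hm : #{x ∈ X.erase a | (R x).2 = a} = m + 1) :
    K * pathWt (extremeWt K R) t (X.erase a) a + pathWt (extremeWt K R) t (X.erase b) b ≤
      α * (c * ∏ v ∈ X, vertVal α β γ R (insert t X) v) := by
  have h := hP.valOrder
  have hc0 : 0 ≤ c := by linarith
  have hF0 : 0 ≤ c * ∏ v ∈ X.erase a, vertVal α β γ R (insert t X) v :=
    mul_nonneg hc0 (prod_vertVal_nonneg h _ _ _)
  rw [← mul_prod_erase X _ ha, mul_left_comm c]
  by_cases hT : (R a).1 = b ∨ ∃ z ∈ X.erase b, z ≠ a ∧ ((R z).1 = b ∨ (R z).2 = b)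
  · have hb' : pathWt (extremeWt K R) t (X.erase b) b ≤
      c * (ρ ^ (m + 1) * (ρ + (m + 1) * (u * vertVal α β γ R (insert t X) a)) *
        ∏ v ∈ X.erase a, vertVal α β γ R (insert t X) v) := by
      rcases hT with hT | ⟨x, hx, hxa, hxR⟩
      · exact pathWt_erase_le_of_fst_eq hP hc hR ht hB ha hb hab hM hm hT
      · have hx' : x ∈ X.erase a := mem_erase.2 ⟨hxa, mem_of_mem_erase hx⟩
        by_cases hx2 : (R x).2 = a
        · exact pathWt_erase_le_of_dead hP hc hR ht hB ha hb hab hM hm hx' hx2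
            (hxR.resolve_right fun e => hab (hx2.symm.trans e))
        · exact pathWt_erase_le_of_other hP hc hR ht hB ha hb hab hM hm hx' (ne_of_mem_erase hx)
            hx2 hxR
    have ha' := mul_le_mul_of_nonneg_left (pathWt_erase_le_pow hP hc hR ht hB ha h1) hP.K_pos.le
    rw [hm] at ha'
    refine (add_le_add ha' hb').trans ?_
    rw [vertVal, rowVal, if_pos h1]
    split_ifs with h2
    · have := mul_le_mul_of_nonneg_right (hP.final_full m) hF0
      rw [mul_comm u, hP.mul_u]
      linarith
    · have := mul_le_mul_of_nonneg_right (hP.final_fst m) hF0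
      rw [mul_comm u, hP.β_u]
      linarith
  · push Not at hT
    obtain ⟨hT1, hT2⟩ := hT
    obtain rfl : z = a := by
      by_contra hza
      have := hT2 z hz hza
      tauto
    have hz2 : (R z).2 = b := hzR.resolve_left hT1
    obtain ⟨hb', ha'⟩ := pathWt_erase_le_of_snd_eq hP hc hR ht hB ha hb hab hM hm hz2 hlive hT2
    have hfull : (R z).2 ∈ (insert t X).erase z := by
      rw [hz2]; exact mem_erase.2 ⟨hab.symm, mem_insert_of_mem hb⟩
    refine (add_le_add (mul_le_mul_of_nonneg_left ha' hP.K_pos.le) hb').trans ?_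
    rw [vertVal, rowVal, if_pos h1, if_pos hfull]
    have := mul_le_mul_of_nonneg_right (hP.final_both m) hF0
    linarith

theorem mul_stepWt_add_le (hc : 1 ≤ c) (hcK : K ≤ (α - 1) * c) (hR : ∀ v, (R v).1 ≠ (R v).2)
    (ht : t ∉ X) (hB : ∀ Y ⊂ X, Bounded K c α β γ t Y) (ha : a ∈ insert t X)
    (hb : b ∈ insert t X) (hab : a ≠ b) :
    K * stepWt K R t X a + stepWt K R t X b ≤
      α * (c * ∏ v ∈ X, vertVal α β γ R (insert t X) v) := by
  have h := hP.valOrder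
  have hK := hP.K_pos
  have hc0 : 0 ≤ c := by linarith
  have hqa := stepWt_le h hc hR ht hB a
  have hqb := stepWt_le h hc hR ht hB b
  have hone := one_le_prod_vertVal h R (insert t X) X
  have hαK : 0 ≤ (α - 1) * c := by linarith
  rcases mem_insert.1 ha with rfl | ha
  · rw [stepWt_self]
    nlinarith
  have of_r : stepWt K R t X a ≤ r * (c * ∏ v ∈ X, vertVal α β γ R (insert t X) v) →
      K * stepWt K R t X a + stepWt K R t X b ≤
        α * (c * ∏ v ∈ X, vertVal α β γ R (insert t X) v) := by
    intro hr
    have h1 := mul_le_mul_of_nonneg_left hr hK.le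
    have h2 := congrArg (· * (c * ∏ v ∈ X, vertVal α β γ R (insert t X) v)) hP.K_mul_r
    linarith
  rw [stepWt_of_mem ht ha] at of_r ⊢
  by_cases hbad : (R a).1 ∈ (insert t X).erase a ∧ ∀ x ∈ X.erase a, (R x).1 ≠ a ∧
      ((R x).2 = a → (R x).1 ∈ (insert t X).erase x)
  swap
  · exact of_r (pathWt_erase_le_r_of_fst hP hc hR ht hB ha hbad)
  obtain ⟨h1, hM⟩ := hbad
  have of_one : stepWt K R t X b ≤ c * ∏ v ∈ X.erase a, vertVal α β γ R (insert t X) v →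
      K * pathWt (extremeWt K R) t (X.erase a) a + stepWt K R t X b ≤
        α * (c * ∏ v ∈ X, vertVal α β γ R (insert t X) v) := by
    intro h2
    have hF0 : 0 ≤ c * ∏ v ∈ X.erase a, vertVal α β γ R (insert t X) v :=
      mul_nonneg hc0 (prod_vertVal_nonneg h _ _ _)
    have hpow : ρ ^ #{x ∈ X.erase a | (R x).2 = a} ≤ 1 :=
      pow_le_one₀ hP.ρ_pos.le hP.ρ_le_one
    have h3 := pathWt_erase_le_pow hP hc hR ht hB ha h1
    rw [← mul_prod_erase X _ ha, mul_left_comm c, vertVal, rowVal, if_pos h1]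
    split_ifs at h3 ⊢ with h4
    · have h5 : α * ρ ^ #{x ∈ X.erase a | (R x).2 = a} ≤ α := by nlinarith [hP.α_pos]
      have h6 := mul_le_mul_of_nonneg_left (h3.trans (mul_le_mul_of_nonneg_right h5 hF0)) hK.le
      have h7 := congrArg (· * (c * ∏ v ∈ X.erase a, vertVal α β γ R (insert t X) v)) hP.K_mul_α
      linarith
    · have h5 : K * ρ ^ #{x ∈ X.erase a | (R x).2 = a} ≤ K := by nlinarith
      have h6 := mul_le_mul_of_nonneg_left (h3.trans (mul_le_mul_of_nonneg_right h5 hF0)) hK.le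
      have h7 := congrArg (· * (c * ∏ v ∈ X.erase a, vertVal α β γ R (insert t X) v)) hP.K_sq
      linarith
  rcases mem_insert.1 hb with rfl | hb
  · refine of_one ?_
    rw [stepWt_self]
    nlinarith [one_le_prod_vertVal h R (insert b X) (X.erase a)]
  rw [stepWt_of_mem ht hb] at of_r of_one ⊢
  by_cases hlive : (R b).1 ∈ (insert t X).erase b ∨ (R b).2 ∈ (insert t X).erase b
  swap
  · refine of_one ?_
    rw [not_or] at hlive
    have := pathWt_erase_le_single hK.le h hc hR ht hB hb
    rw [if_neg hlive.1, if_neg hlive.2, mul_zero, add_zero, zero_mul] at this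
    exact this.trans (mul_nonneg hc0 (prod_vertVal_nonneg h _ _ _))
  by_cases hin : ∀ x ∈ X.erase b, (R x).1 ≠ b ∧ (R x).2 ≠ b
  · exact of_r (pathWt_erase_le_r_of_snd hP hc hR ht hB ha hb hab hlive hin)
  obtain ⟨z, hz, hzR⟩ : ∃ z ∈ X.erase b, (R z).1 = b ∨ (R z).2 = b := by
    by_contra hcon
    push Not at hcon
    exact hin hcon
  rcases hm : #{x ∈ X.erase a | (R x).2 = a} with _ | m
  · refine of_one ?_
    rw [card_eq_zero, filter_eq_empty_iff] at hm
    refine (pathWt_erase_le_of_forall hK.le hR ht hb ha hab.symm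
      (hB _ ((erase_subset _ _).trans_ssubset (erase_ssubset hb)))
      fun x hx => ⟨(hM x hx).1, hm hx⟩).trans ?_
    exact mul_le_mul_of_nonneg_left
      (prod_vertVal_mono h R ((erase_subset _ _).trans (erase_subset _ _)) _) hc0
  · exact mul_pathWt_add_le hP hc hR ht hB ha hb hab h1 hM hlive hz hzR hm

theorem bounded_core (hc : 1 ≤ c) (hcK : K ≤ (α - 1) * c) (ht : t ∉ X) :
    Bounded K c α β γ t X := by
  induction X using Finset.strongInduction with
  | H X ih =>
  have hB : ∀ Y ⊂ X, Bounded K c α β γ t Y := fun Y hY => ih Y hY fun h => ht (hY.1 h)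
  intro R hR s hs hst
  have h := hP.valOrder
  have hK := hP.K_pos
  have hΦ : 0 ≤ c * ∏ v ∈ X, vertVal α β γ R (insert t X) v :=
    mul_nonneg (by linarith) (prod_vertVal_nonneg h _ _ _)
  have hsS : s ∉ insert t X := by simp [hst, hs]
  have q1 := mul_le_mul_of_nonneg_left (stepWt_le h hc hR ht hB (R s).1) hK.le
  have q2 := stepWt_le h hc hR ht hB (R s).2
  rw [pathWt_extremeWt K R ht s, prod_insert hs, vertVal, rowVal, erase_eq_of_notMem hsS,
    mul_left_comm c]
  by_cases h1 : (R s).1 ∈ insert t X <;> by_cases h2 : (R s).2 ∈ insert t X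
  · rw [if_pos h1, if_pos h2]
    exact mul_stepWt_add_le hP hc hcK hR ht hB h1 h2 (hR s)
  · rw [if_pos h1, if_neg h2, stepWt_of_notMem h2]
    nlinarith [hP.K_le]
  · rw [if_neg h1, if_pos h2, stepWt_of_notMem h1]
    nlinarith [h.one_le_snd]
  · rw [if_neg h1, if_neg h2, stepWt_of_notMem h1, stepWt_of_notMem h2]
    linarith

end core

theorem pathWt_le_of_bounded [Fintype V] [Nontrivial V] {K c α β γ : ℝ} (h : ValOrder α β γ)
    (hK : 1 ≤ K) (hc : 0 ≤ c) {G : V → V → ℝ} (hG : ∀ u v, 0 ≤ G u v) (hGK : ∀ u v, G u v ≤ K)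
    (hsum : ∀ u, ∑ v, G u v ≤ K + 1) {t s : V} {X : Finset V} (hs : s ∉ X) (hst : s ≠ t)
    (hB : Bounded K c α β γ t X) : pathWt G t X s ≤ c * α ^ (#X + 1) := by
  obtain ⟨R, hR, hle⟩ := exists_pathWt_le_extremeWt hK hG hGK hsum t X s hs
  refine (hle.trans (hB R hR s hs hst)).trans (mul_le_mul_of_nonneg_left ?_ hc)
  rw [← card_insert_of_notMem hs, ← prod_const]
  exact prod_le_prod (fun v _ => vertVal_nonneg h R _ v) fun v _ => vertVal_le h R _ v

section cycles

variable [Fintype V]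

/-- The cyclic permutations moving `r` that are supported in `insert r X`. -/
noncomputable def cyclesThrough (r : V) (X : Finset V) : Finset (Equiv.Perm V) :=
  {σ | σ.IsCycle ∧ r ∈ σ.support ∧ σ.support ⊆ insert r X}

/-- Total weight of the cycles through `r` with the other vertices in `X`, where arcs leaving `r`
have weights `w`. -/
noncomputable def cycleWt (G : V → V → ℝ) (w : V → ℝ) (r : V) (X : Finset V) : ℝ :=
  ∑ σ ∈ cyclesThrough r X, w (σ r) * ∏ v ∈ σ.support.erase r, G v (σ v)

theorem support_mul_swap {τ : Equiv.Perm V} {r y : V} (hr : τ r ≠ r) (hy : τ y = y) :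
    (τ * Equiv.swap r y).support = insert y τ.support := by
  have hry : r ≠ y := by rintro rfl; exact hr hy
  ext v
  rw [mem_insert, Equiv.Perm.mem_support, Equiv.Perm.mem_support, Equiv.Perm.mul_apply]
  rcases eq_or_ne v r with rfl | hvr
  · simp [hy, hry.symm, hr]
  rcases eq_or_ne v y with rfl | hvy
  · rw [Equiv.swap_apply_right]
    simp only [true_or, iff_true]
    intro e
    exact hvr (τ.injective (e.trans hy.symm)).symm
  · rw [Equiv.swap_apply_of_ne_of_ne hvr hvy]
    simp [hvy]

theorem prod_mul_swap (G : V → V → ℝ) {τ : Equiv.Perm V} {r y : V} (hr : τ r ≠ r)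
    (hy : τ y = y) :
    ∏ v ∈ (τ * Equiv.swap r y).support.erase r, G v ((τ * Equiv.swap r y) v) =
      G y (τ r) * ∏ v ∈ τ.support.erase r, G v (τ v) := by
  have hry : y ≠ r := by rintro rfl; exact hr hy
  rw [support_mul_swap hr hy, erase_insert_of_ne hry, prod_insert (by simp [hy])]
  congr 1
  · simp
  · refine prod_congr rfl fun v hv => ?_
    have hvy : v ≠ y := by
      rintro rfl
      exact Equiv.Perm.mem_support.1 (mem_of_mem_erase hv) hy
    rw [Equiv.Perm.mul_apply, Equiv.swap_apply_of_ne_of_ne (ne_of_mem_erase hv) hvy]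

theorem prod_swap (G : V → V → ℝ) {r y : V} (hry : r ≠ y) :
    ∏ v ∈ (Equiv.swap r y).support.erase r, G v (Equiv.swap r y v) = G y r := by
  rw [Equiv.Perm.support_swap hry, erase_insert (by simpa using hry), prod_singleton,
    Equiv.swap_apply_right]

/-- Removing the vertex after `r` from a cycle through `r`. -/
theorem exists_mul_swap_eq {r : V} {X : Finset V} {σ : Equiv.Perm V}
    (hσ : σ ∈ cyclesThrough r X) (hne : σ ≠ Equiv.swap r (σ r)) :
    ∃ τ ∈ cyclesThrough r (X.erase (σ r)), τ * Equiv.swap r (σ r) = σ := by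
  simp only [cyclesThrough, mem_filter, mem_univ, true_and] at hσ
  obtain ⟨hc, hr, hX⟩ := hσ
  rw [Equiv.Perm.mem_support] at hr
  have h2 : σ (σ r) ≠ r := fun h => hne (hc.eq_swap_of_apply_apply_eq_self hr h)
  have hτ : σ * Equiv.swap r (σ r) = Equiv.swap (σ r) (σ (σ r)) * σ := by
    rw [Equiv.swap_apply_apply]
    group
  have hτr : (σ * Equiv.swap r (σ r)) r = σ (σ r) := by simp
  have hτy : (σ * Equiv.swap r (σ r)) (σ r) = σ r := by simp
  have hsupp := support_mul_swap (τ := σ * Equiv.swap r (σ r)) (r := r) (by rwa [hτr]) hτy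
  have hmul : σ * Equiv.swap r (σ r) * Equiv.swap r (σ r) = σ := by
    rw [mul_assoc, Equiv.swap_mul_self, mul_one]
  rw [hmul] at hsupp
  refine ⟨σ * Equiv.swap r (σ r), ?_, hmul⟩
  simp only [cyclesThrough, mem_filter, mem_univ, true_and]
  refine ⟨?_, ?_, fun v hv => ?_⟩
  · rw [hτ]
    exact hc.swap_mul (fun h => hr (σ.injective h)) fun h => h2 (σ.injective h)
  · rwa [Equiv.Perm.mem_support, hτr]
  · have hvy : v ≠ σ r := by
      rintro rfl
      exact Equiv.Perm.mem_support.1 hv hτy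
    have := hX (hsupp ▸ mem_insert_of_mem hv)
    rw [mem_insert] at this ⊢
    exact this.imp_right fun h => mem_erase.2 ⟨hvy, h⟩

theorem cycleWt_le_sum {G : V → V → ℝ} (hG : ∀ u v, 0 ≤ G u v) {w : V → ℝ} (hw : ∀ v, 0 ≤ w v)
    {r : V} {X : Finset V} (hr : r ∉ X) :
    cycleWt G w r X ≤ ∑ y ∈ X, w y * (G y r + cycleWt G (G y) r (X.erase y)) := by
  have hmaps : ∀ σ ∈ cyclesThrough r X, σ r ∈ X := by
    intro σ hσ
    simp only [cyclesThrough, mem_filter, mem_univ, true_and] at hσ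
    have := hσ.2.2 (Equiv.Perm.apply_mem_support.2 hσ.2.1)
    exact (mem_insert.1 this).resolve_left (Equiv.Perm.mem_support.1 hσ.2.1)
  rw [cycleWt, ← sum_fiberwise_of_maps_to hmaps]
  refine sum_le_sum fun y hy => ?_
  have hry : r ≠ y := by rintro rfl; exact hr hy
  have hP : ∀ σ : Equiv.Perm V, 0 ≤ ∏ v ∈ σ.support.erase r, G v (σ v) :=
    fun σ => prod_nonneg fun _ _ => hG _ _
  have hsub : {σ ∈ cyclesThrough r X | σ r = y} ⊆ insert (Equiv.swap r y)
      ((cyclesThrough r (X.erase y)).image (· * Equiv.swap r y)) := by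
    intro σ hσ
    obtain ⟨hσ', rfl⟩ := mem_filter.1 hσ
    rw [mem_insert, mem_image]
    by_cases hne : σ = Equiv.swap r (σ r)
    · exact Or.inl hne
    · exact Or.inr (exists_mul_swap_eq hσ' hne)
  calc ∑ σ ∈ cyclesThrough r X with σ r = y, w (σ r) * ∏ v ∈ σ.support.erase r, G v (σ v)
      = w y * ∑ σ ∈ cyclesThrough r X with σ r = y, ∏ v ∈ σ.support.erase r, G v (σ v) := by
        rw [mul_sum]
        refine sum_congr rfl fun σ hσ => ?_
        rw [(mem_filter.1 hσ).2]
    _ ≤ w y * (G y r + cycleWt G (G y) r (X.erase y)) := by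
        refine mul_le_mul_of_nonneg_left ?_ (hw y)
        refine (sum_le_sum_of_subset_of_nonneg hsub fun σ _ _ => hP σ).trans ?_
        have hins : Equiv.swap r y ∉ (cyclesThrough r (X.erase y)).image (· * Equiv.swap r y) := by
          rw [mem_image]
          rintro ⟨τ, hτ, e⟩
          simp only [cyclesThrough, mem_filter, mem_univ, true_and] at hτ
          exact hτ.1.ne_one (mul_eq_right.1 e)
        rw [sum_insert hins, prod_swap G hry, cycleWt, sum_image fun σ _ τ _ h => mul_right_cancel h]
        refine add_le_add le_rfl (sum_le_sum fun τ hτ => le_of_eq ?_)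
        simp only [cyclesThrough, mem_filter, mem_univ, true_and] at hτ
        refine prod_mul_swap G (Equiv.Perm.mem_support.1 hτ.2.1) ?_
        by_contra hy'
        have := hτ.2.2 (Equiv.Perm.mem_support.2 hy')
        simp [hry.symm] at this

theorem cycleWt_le_pathWt {G : V → V → ℝ} (hG : ∀ u v, 0 ≤ G u v) {w : V → ℝ}
    (hw : ∀ v, 0 ≤ w v) {r : V} {X : Finset V} (hr : r ∉ X) :
    cycleWt G w r X ≤ ∑ y ∈ X, w y * pathWt G r (X.erase y) y := by
  induction X using Finset.strongInduction generalizing w with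
  | H X ih =>
    refine (cycleWt_le_sum hG hw hr).trans
      (sum_le_sum fun y hy => mul_le_mul_of_nonneg_left ?_ (hw y))
    rw [pathWt_eq]
    exact add_le_add le_rfl
      (ih _ (erase_ssubset hy) (hG y) fun h => hr (mem_of_mem_erase h))

end cycles

/-- Every cycle is counted at its largest vertex. -/
theorem sum_isCycle_le {n : ℕ} {G : Fin n → Fin n → ℝ} (hG : ∀ u v, 0 ≤ G u v) :
    ∑ σ : Equiv.Perm (Fin n) with σ.IsCycle, ∏ v ∈ σ.support, G v (σ v) ≤
      ∑ r, cycleWt G (G r) r (Iio r) := by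
  have hP : ∀ σ : Equiv.Perm (Fin n), 0 ≤ ∏ v ∈ σ.support, G v (σ v) :=
    fun σ => prod_nonneg fun _ _ => hG _ _
  have hmem : ∀ σ : Equiv.Perm (Fin n), σ.IsCycle → ∃ r, σ ∈ cyclesThrough r (Iio r) := by
    intro σ hσ
    have hne : σ.support.Nonempty := by
      obtain ⟨x, hx, -⟩ := hσ
      exact ⟨x, Equiv.Perm.mem_support.2 hx⟩
    refine ⟨σ.support.max' hne, ?_⟩
    simp only [cyclesThrough, mem_filter, mem_univ, true_and]
    refine ⟨hσ, max'_mem _ _, fun v hv => ?_⟩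
    rw [mem_insert, mem_Iio]
    exact (le_max' _ _ hv).eq_or_lt
  rcases isEmpty_or_nonempty (Fin n) with hn | hn
  · rw [sum_eq_zero fun σ hσ => isEmptyElim (hmem σ (mem_filter.1 hσ).2).choose, sum_of_isEmpty]
  choose! m hm using hmem
  calc ∑ σ : Equiv.Perm (Fin n) with σ.IsCycle, ∏ v ∈ σ.support, G v (σ v)
      = ∑ r, ∑ σ ∈ {σ : Equiv.Perm (Fin n) | σ.IsCycle} with m σ = r, ∏ v ∈ σ.support, G v (σ v) :=
        (sum_fiberwise _ _ _).symm
    _ ≤ ∑ r : Fin n, ∑ σ ∈ cyclesThrough r (Iio r), ∏ v ∈ σ.support, G v (σ v) := by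
        refine sum_le_sum fun r _ =>
          sum_le_sum_of_subset_of_nonneg (fun σ hσ => ?_) fun σ _ _ => hP σ
        obtain ⟨hσ', rfl⟩ := mem_filter.1 hσ
        exact hm σ (mem_filter.1 hσ').2
    _ = ∑ r, cycleWt G (G r) r (Iio r) := by
        refine sum_congr rfl fun r _ => sum_congr rfl fun σ hσ => ?_
        simp only [cyclesThrough, mem_filter, mem_univ, true_and] at hσ
        rw [mul_prod_erase _ (fun v => G v (σ v)) hσ.2.1]

theorem alphaK_pos (k : ℕ) : 0 < alphaK k := by
  have h : |(k : ℝ) - 1| < √(((k : ℝ) - 1) ^ 2 + 4) :=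
    Real.lt_sqrt_of_sq_lt (by rw [sq_abs]; linarith)
  have := neg_abs_le ((k : ℝ) - 1)
  unfold alphaK
  linarith

theorem alphaK_sq (k : ℕ) : alphaK k ^ 2 = ((k : ℝ) - 1) * alphaK k + 1 := by
  have := Real.sq_sqrt (show 0 ≤ ((k : ℝ) - 1) ^ 2 + 4 by positivity)
  unfold alphaK
  linear_combination this / 4

/-- Weights bounded by `k - 1` with row sums at most `k` have path weights of order `α(k) ^ n`. -/
theorem exists_pathWt_le {k : ℕ} (hk : 2 ≤ k) : ∃ c : ℝ, 1 ≤ c ∧ k * c ≤ 5 * (alphaK k - 1) ∧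
    ∀ (n : ℕ) (G : Fin n → Fin n → ℝ), (∀ u v, 0 ≤ G u v) → (∀ u v, G u v ≤ (k : ℝ) - 1) →
      (∀ u, ∑ v, G u v ≤ k) → ∀ (t s : Fin n) (X : Finset (Fin n)), t ∉ X → s ∉ X → s ≠ t →
        pathWt G t X s ≤ c * alphaK k ^ (#X + 1) := by
  have h0 := alphaK_pos k
  have hsq := alphaK_sq k
  rcases hk.eq_or_lt with rfl | hk3
  · norm_num at hsq
    refine ⟨1, le_rfl, by norm_num; nlinarith, fun n G hG hGK hsum t s X ht hs hst => ?_⟩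
    have hβ : 2 / alphaK 2 * alphaK 2 = 2 := div_mul_cancel₀ _ h0.ne'
    have : Nontrivial (Fin n) := ⟨s, t, hst⟩
    refine pathWt_le_of_bounded (valOrder_golden hsq h0 hβ) le_rfl zero_le_one hG
      (fun u v => (hGK u v).trans (by norm_num)) (fun u => (hsum u).trans (by norm_num)) hs hst
      (bounded_golden hsq h0 hβ ht)
  · have hk3' : (3 : ℝ) ≤ k := by exact_mod_cast hk3
    have hu : alphaK k * (alphaK k)⁻¹ = 1 := mul_inv_cancel₀ h0.ne'
    have hu0 : 0 < (alphaK k)⁻¹ := inv_pos.2 h0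
    generalize hu' : (alphaK k)⁻¹ = u at hu hu0
    have hK : (k : ℝ) - 1 = alphaK k - u := by
      have : ((k : ℝ) - 1 - (alphaK k - u)) * alphaK k = 0 := by linear_combination hu - hsq
      have := (mul_eq_zero.1 this).resolve_right h0.ne'
      linarith
    have hP : CoreParams ((k : ℝ) - 1) (alphaK k) ((1 - u ^ 2 + u ^ 4) * alphaK k)
        ((1 + u)⁻¹ * alphaK k) u (1 - u ^ 2 + u ^ 4) (1 + u)⁻¹ :=
      ⟨hu0, by nlinarith, hu, hK, rfl, inv_mul_cancel₀ (by linarith), rfl, rfl⟩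
    have hα := hP.le_α
    have hα' : 7 / 3 ≤ alphaK k := by
      by_contra! h
      nlinarith
    refine ⟨2, one_le_two, by linarith, fun n G hG hGK hsum t s X ht hs hst => ?_⟩
    have : Nontrivial (Fin n) := ⟨s, t, hst⟩
    exact pathWt_le_of_bounded hP.valOrder (by linarith) zero_le_two hG hGK
      (fun u => (hsum u).trans (by linarith)) hs hst
      (bounded_core hP one_le_two (by linarith) ht)

theorem cycleCount_le {n k : ℕ} (hk : 2 ≤ k) {G : Fin n → Fin n → ℕ}
    (hG : ∀ v, (∑ u, G v u) = k) (hGK : ∀ u v, u ≠ v → G u v ≤ k - 1) :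
    (cycleCount n G : ℝ) ≤ 5 * alphaK k ^ n := by
  obtain ⟨c, hc, hcα, hpath⟩ := exists_pathWt_le hk
  have hk2 : (2 : ℝ) ≤ k := by exact_mod_cast hk
  have hα : 1 < alphaK k := by nlinarith
  set H : Fin n → Fin n → ℝ := fun u v => if u = v then 0 else G u v with hH
  have hH0 : ∀ u v, 0 ≤ H u v := fun u v => by
    simp only [hH]
    split_ifs <;> positivity
  have hHK : ∀ u v, H u v ≤ (k : ℝ) - 1 := fun u v => by
    simp only [hH]
    split_ifs with h
    · linarith
    · have := hGK u v h
      have : ((G u v : ℕ) : ℝ) ≤ ((k - 1 : ℕ) : ℝ) := by exact_mod_cast this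
      rwa [Nat.cast_sub (by lia), Nat.cast_one] at this
  have hHG : ∀ u v, H u v ≤ G u v := fun u v => by
    simp only [hH]
    split_ifs <;> simp
  have hGr : ∀ u, ∑ v, (G u v : ℝ) = k := fun u => by exact_mod_cast hG u
  have hHsum : ∀ u, ∑ v, H u v ≤ k := fun u => (sum_le_sum fun v _ => hHG u v).trans_eq (hGr u)
  have hcyc : (cycleCount n G : ℝ) = ∑ v, (G v v : ℝ) +
      ∑ σ : Equiv.Perm (Fin n) with σ.IsCycle, ∏ v ∈ σ.support, H v (σ v) := by
    rw [cycleCount, ← sum_filter]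
    push_cast
    congr 1
    refine sum_congr rfl fun σ _ => prod_congr rfl fun v hv => ?_
    simp only [hH]
    rw [if_neg (Equiv.Perm.mem_support.1 hv).symm]
  have hrow : ∀ r : Fin n, (G r r : ℝ) + cycleWt H (H r) r (Iio r) ≤
      k * c * alphaK k ^ (r : ℕ) := by
    intro r
    have hpow : 1 ≤ alphaK k ^ (r : ℕ) := one_le_pow₀ hα.le
    have hcp : 1 ≤ c * alphaK k ^ (r : ℕ) := by nlinarith
    have hr : r ∉ Iio r := by simp
    have h1 := cycleWt_le_pathWt hH0 (hH0 r) hr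
    have h2 : ∑ y ∈ Iio r, H r y * pathWt H r ((Iio r).erase y) y ≤
        ∑ y ∈ Iio r, G r y * (c * alphaK k ^ (r : ℕ)) := by
      refine sum_le_sum fun y hy => mul_le_mul (hHG r y) ?_ (pathWt_nonneg hH0 _ _ _)
        (Nat.cast_nonneg _)
      have := hpath n H hH0 hHK hHsum r y ((Iio r).erase y) (fun h => hr (mem_of_mem_erase h))
        (notMem_erase _ _) (by rintro rfl; exact hr hy)
      rwa [card_erase_add_one hy, Fin.card_Iio] at this
    have h3 : (G r r : ℝ) + ∑ y ∈ Iio r, (G r y : ℝ) ≤ k := by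
      rw [← sum_insert (f := fun y => (G r y : ℝ)) hr, ← hGr r]
      exact sum_le_sum_of_subset_of_nonneg (subset_univ _) fun _ _ _ => Nat.cast_nonneg _
    rw [← sum_mul] at h2
    have h4 := mul_le_mul_of_nonneg_right h3 (zero_le_one.trans hcp)
    have h5 := mul_le_mul_of_nonneg_left hcp (Nat.cast_nonneg (α := ℝ) (G r r))
    linarith
  have hgeom := geom_sum_eq hα.ne' n
  rw [eq_div_iff (by linarith)] at hgeom
  have hS : 0 ≤ ∑ i ∈ range n, alphaK k ^ i := sum_nonneg fun _ _ => by positivity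
  calc (cycleCount n G : ℝ) ≤ ∑ r : Fin n, ((G r r : ℝ) + cycleWt H (H r) r (Iio r)) := by
        rw [hcyc, sum_add_distrib]
        exact add_le_add le_rfl (sum_isCycle_le hH0)
    _ ≤ ∑ r : Fin n, k * c * alphaK k ^ (r : ℕ) := sum_le_sum fun r _ => hrow r
    _ = k * c * ∑ i ∈ range n, alphaK k ^ i := by
        rw [← mul_sum, Fin.sum_univ_eq_sum_range fun i => alphaK k ^ i]
    _ ≤ 5 * (alphaK k - 1) * ∑ i ∈ range n, alphaK k ^ i := mul_le_mul_of_nonneg_right hcα hS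
    _ ≤ 5 * alphaK k ^ n := by linarith

end PathWeight

theorem stmt_5 (n k : ℕ) (hk : 2 ≤ k) :
    (Fk k n : ℝ) ≤ 5 * alphaK k ^ n ∧
    ∀ G : Fin n → Fin n → ℕ,
      (∀ v : Fin n, (∑ u, G v u) = k) →
      (∀ u v : Fin n, u ≠ v → G u v ≤ k - 1) →
      (cycleCount n G : ℝ) ≤ 5 * alphaK k ^ n := by
  have h0 : 0 ≤ 5 * alphaK k ^ n := by have := PathWeight.alphaK_pos k; positivity
  refine ⟨le_trans (Nat.cast_le.2 (csSup_le' ?_)) (Nat.floor_le h0),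
    fun G hG hGK => PathWeight.cycleCount_le hk hG hGK⟩
  rintro _ ⟨G, hG, hGK, rfl⟩
  exact Nat.le_floor (PathWeight.cycleCount_le hk hG hGK)
end
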